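/- Let N ≥ 2, 1 < p ≤ N and p − 1 < q < q_c, and let Ω ⊆ ℝ^N be an open set containing 0. Let u be a strong solution of (E) on Ω ∖ {0} with u ≥ 0 on Ω ∖ {0}. Then exactly one of the following alternatives holds: (i) there exists k ≥ 0 such that lim_{x→0} u(x)/μ_p(x) = k; or (ii) lim_{x→0} |x|^{β_q} u(x) = λ_{N,p,q}. -/

import Mathlib

open Metric Set Filter Topology MeasureTheory

/-- The vector field `x ↦ |∇u(x)|^{p-2} ∇u(x)`. -/
noncomputable def pGradField {N : ℕ} (p : ℝ) (u : EuclideanSpace ℝ (Fin N) → ℝ)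
    (x : EuclideanSpace ℝ (Fin N)) : EuclideanSpace ℝ (Fin N) :=
  ‖gradient u x‖ ^ (p - 2) • gradient u x

/-- A strong solution of `(E) : -Δ_p u + |∇u|^q = 0` on an open set `G ⊆ ℝ^N`. -/
def IsStrongSolution {N : ℕ} (p q : ℝ) (G : Set (EuclideanSpace ℝ (Fin N)))
    (u : EuclideanSpace ℝ (Fin N) → ℝ) : Prop :=
  ContDiffOn ℝ 1 u G ∧
  ContDiffOn ℝ 3 u {x | x ∈ G ∧ gradient u x ≠ 0} ∧
  ∀ x ∈ G, DifferentiableAt ℝ (pGradField p u) x ∧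
    LinearMap.trace ℝ (EuclideanSpace ℝ (Fin N))
      (fderiv ℝ (pGradField p u) x : EuclideanSpace ℝ (Fin N) →ₗ[ℝ] EuclideanSpace ℝ (Fin N))
      = ‖gradient u x‖ ^ q

/-- The fundamental solution of the p-Laplacian in `ℝ^N`. -/
noncomputable def mup (N : ℕ) (p : ℝ) (x : EuclideanSpace ℝ (Fin N)) : ℝ :=
  if p < N then ((p - 1) / ((N : ℝ) - p)) * ‖x‖ ^ ((p - (N : ℝ)) / (p - 1))
  else -Real.log ‖x‖

/-!
The operator is invariant under rotations and the equation under the rescalings `x ↦ r x`. Radial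
barriers solving the equation on annuli give the a priori bound `u ≤ C |x|^{-β}`, and, passing to
the limit, the sharp constant `λ` as an upper bound for `|x|^β u`. The Ishii–Lions doubling of
variables gives a Hölder bound for solutions on `1 ≤ |x| ≤ 3`; with Hopf-type barriers it turns a
gap between a solution and a multiple of `μ_p` at one point of the sphere `|x| = 2` into a gap,
bounded below uniformly, on the whole sphere.

Suppose that some multiple of `μ_p` dominates `u` on arbitrarily small spheres, and let `k` be the
infimum of such multiples. Comparison gives `u ≤ k μ_p + A`. If `u / μ_p` fell below `k` along a
sequence tending to `0`, the rescaled gap estimate would give a smaller multiple dominating `u` on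
arbitrarily small spheres; hence `u / μ_p → k`. Otherwise every multiple of `μ_p` is exceeded
somewhere on each small sphere. At scales where `u` satisfies a doubling inequality the gap estimate
below a constant acts as a Harnack inequality, so `u` lies above every multiple of `μ_p` on whole
arbitrarily small spheres, and comparison with the decreasing radial solutions yields the matching
lower bound `λ |x|^{-β}`.
-/

open Module (finrank)
open NormedSpace (normalize norm_normalize)
open InnerProductGeometry (angle)

/-! ### Second-order jets along lines -/

/-- `φ` is differentiable near `0`, with first derivative `a` and second derivative `b` at `0`. -/
def HasSecondDeriv (φ : ℝ → ℝ) (a b : ℝ) : Prop :=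
  ∃ φ' : ℝ → ℝ, (∀ᶠ s in 𝓝 0, HasDerivAt φ (φ' s) s) ∧ φ' 0 = a ∧ HasDerivAt φ' b 0

namespace HasSecondDeriv

variable {φ φ₁ φ₂ : ℝ → ℝ} {a b a₁ b₁ a₂ b₂ : ℝ}

lemma add (h₁ : HasSecondDeriv φ₁ a₁ b₁) (h₂ : HasSecondDeriv φ₂ a₂ b₂) :
    HasSecondDeriv (fun s => φ₁ s + φ₂ s) (a₁ + a₂) (b₁ + b₂) := by
  obtain ⟨φ₁', hφ₁, h0₁, hφ₁'⟩ := h₁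
  obtain ⟨φ₂', hφ₂, h0₂, hφ₂'⟩ := h₂
  refine ⟨fun s => φ₁' s + φ₂' s, ?_, by simp only [h0₁, h0₂], hφ₁'.add hφ₂'⟩
  filter_upwards [hφ₁, hφ₂] with s hs₁ hs₂ using hs₁.add hs₂

lemma const_mul (c : ℝ) (h : HasSecondDeriv φ a b) :
    HasSecondDeriv (fun s => c * φ s) (c * a) (c * b) := by
  obtain ⟨φ', hφ, h0, hφ'⟩ := h
  refine ⟨fun s => c * φ' s, ?_, by simp only [h0], hφ'.const_mul c⟩
  filter_upwards [hφ] with s hs using hs.const_mul c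

lemma sub (h₁ : HasSecondDeriv φ₁ a₁ b₁) (h₂ : HasSecondDeriv φ₂ a₂ b₂) :
    HasSecondDeriv (fun s => φ₁ s - φ₂ s) (a₁ - a₂) (b₁ - b₂) := by
  simpa [sub_eq_add_neg] using h₁.add (h₂.const_mul (-1))

lemma hasDerivAt (h : HasSecondDeriv φ a b) : HasDerivAt φ a 0 := by
  obtain ⟨φ', hφ, h0, -⟩ := h
  exact h0 ▸ hφ.self_of_nhds

lemma nonpos_of_isLocalMax (h : HasSecondDeriv φ a b) (hmax : IsLocalMax φ 0) : b ≤ 0 := by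
  by_contra! hb
  have ha : deriv φ 0 = 0 := hmax.deriv_eq_zero
  have hcont := h.hasDerivAt.continuousAt
  obtain ⟨φ', hφ, -, hφ'⟩ := h
  have hderiv : deriv φ =ᶠ[𝓝 0] φ' := hφ.mono fun s hs => hs.deriv
  have hb' : deriv (deriv φ) 0 = b := by rw [hderiv.deriv_eq, hφ'.deriv]
  have hmin := isLocalMin_of_deriv_deriv_pos (hb'.symm ▸ hb) ha hcont
  have hconst : φ =ᶠ[𝓝 0] fun _ => φ 0 := by
    filter_upwards [hmax, hmin] with s h₁ h₂ using le_antisymm h₁ h₂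
  have hzero : deriv (deriv φ) 0 = 0 := by simp [hconst.deriv.deriv_eq]
  exact hb.ne' (hb'.symm.trans hzero)

end HasSecondDeriv

section Lines

variable {E : Type*} [NormedAddCommGroup E] [NormedSpace ℝ E]

lemma hasDerivAt_line (x ξ : E) (s : ℝ) : HasDerivAt (fun s : ℝ => x + s • ξ) ξ s := by
  simpa using ((hasDerivAt_id s).smul_const ξ).const_add x

lemma tendsto_line (x ξ : E) : Tendsto (fun s : ℝ => x + s • ξ) (𝓝 0) (𝓝 x) := by
  have : Continuous fun s : ℝ => x + s • ξ := by fun_prop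
  simpa using this.tendsto 0

lemma isLocalMax_comp_line {f : E → ℝ} {x : E} (h : IsLocalMax f x) (ξ : E) :
    IsLocalMax (fun s : ℝ => f (x + s • ξ)) 0 := by
  have := (tendsto_line x ξ).eventually h
  simpa [IsLocalMax, IsMaxFilter] using this

end Lines

section Jets

variable {E : Type*} [NormedAddCommGroup E] [InnerProductSpace ℝ E]

lemma hasDerivAt_norm_line {d ξ : E} {s : ℝ} (h : d + s • ξ ≠ 0) :
    HasDerivAt (fun s : ℝ => ‖d + s • ξ‖) (inner ℝ (d + s • ξ) ξ / ‖d + s • ξ‖) s := by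
  have hsqrt := (hasDerivAt_line d ξ s).norm_sq.sqrt (by simpa using h)
  simp only [Real.sqrt_sq (norm_nonneg _)] at hsqrt
  exact hsqrt.congr_deriv (by ring)

/-- The second-order jet of `w` at `x` is `(g, H)` along every line through `x`. This is all the
maximum principle needs, and it does not require `w` to be twice differentiable. -/
def HasLineJet (w : E → ℝ) (x g : E) (H : E →L[ℝ] E) : Prop :=
  ∀ ξ : E, HasSecondDeriv (fun s : ℝ => w (x + s • ξ)) (inner ℝ g ξ) (inner ℝ (H ξ) ξ)

lemma HasLineJet.add {w₁ w₂ : E → ℝ} {x g₁ g₂ : E} {H₁ H₂ : E →L[ℝ] E}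
    (h₁ : HasLineJet w₁ x g₁ H₁) (h₂ : HasLineJet w₂ x g₂ H₂) :
    HasLineJet (fun y => w₁ y + w₂ y) x (g₁ + g₂) (H₁ + H₂) := fun ξ => by
  simpa [inner_add_left] using (h₁ ξ).add (h₂ ξ)

lemma HasLineJet.const_mul {w : E → ℝ} {x g : E} {H : E →L[ℝ] E} (c : ℝ)
    (h : HasLineJet w x g H) : HasLineJet (fun y => c * w y) x (c • g) (c • H) := fun ξ => by
  simpa [inner_smul_left] using (h ξ).const_mul c

lemma hasLineJet_const (c : ℝ) (x : E) : HasLineJet (fun _ => c) x 0 0 := fun ξ =>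
  ⟨fun _ => 0, .of_forall fun s => hasDerivAt_const s c, by simp,
    by simpa using hasDerivAt_const (0 : ℝ) (0 : ℝ)⟩

lemma hasLineJet_norm_sq (x z : E) :
    HasLineJet (fun y => ‖y - z‖ ^ 2) x ((2 : ℝ) • (x - z))
      ((2 : ℝ) • ContinuousLinearMap.id ℝ E) := fun ξ => by
  refine ⟨fun s => 2 * inner ℝ (x + s • ξ - z) ξ, ?_, by simp [inner_smul_left], ?_⟩
  · filter_upwards with s using ((hasDerivAt_line x ξ s).sub_const z).norm_sq
  · have := ((hasDerivAt_line x ξ 0).sub_const z).inner ℝ (hasDerivAt_const (0 : ℝ) ξ)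
    simpa [inner_smul_left] using this.const_mul 2

/-- The Hessian `a I + b d ⊗ d` of a radial function, `d` being the radial direction. -/
noncomputable def radialHess (d : E) (a b : ℝ) : E →L[ℝ] E :=
  a • ContinuousLinearMap.id ℝ E + b • InnerProductSpace.rankOne ℝ d d

lemma inner_radialHess (d : E) (a b : ℝ) (ξ : E) :
    inner ℝ (radialHess d a b ξ) ξ = a * ‖ξ‖ ^ 2 + b * inner ℝ d ξ ^ 2 := by
  simp only [radialHess, add_apply, smul_apply, ContinuousLinearMap.id_apply,
    InnerProductSpace.rankOne_apply, inner_add_left, inner_smul_left, real_inner_self_eq_norm_sq,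
    conj_trivial]
  ring

lemma hasLineJet_radial {f f' : ℝ → ℝ} {f'' : ℝ} {x z : E} (hxz : x ≠ z)
    (hf : ∀ᶠ t in 𝓝 ‖x - z‖, HasDerivAt f (f' t) t) (hf' : HasDerivAt f' f'' ‖x - z‖) :
    HasLineJet (fun y => f ‖y - z‖) x (f' ‖x - z‖ • normalize (x - z))
      (radialHess (normalize (x - z)) (f' ‖x - z‖ / ‖x - z‖) (f'' - f' ‖x - z‖ / ‖x - z‖)) := by
  intro ξ
  have hd : x - z ≠ 0 := sub_ne_zero.2 hxz
  have hn : ‖x - z‖ ≠ 0 := norm_ne_zero_iff.2 hd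
  simp only [add_sub_right_comm x _ z]
  generalize x - z = d at *
  have hne : ∀ᶠ s : ℝ in 𝓝 0, d + s • ξ ≠ 0 :=
    (tendsto_line d ξ).eventually (isOpen_ne.mem_nhds hd)
  refine ⟨fun s => f' ‖d + s • ξ‖ * (inner ℝ (d + s • ξ) ξ / ‖d + s • ξ‖), ?_, ?_, ?_⟩
  · filter_upwards [hne, (tendsto_line d ξ).norm.eventually hf] with s hs hfs
    exact hfs.comp s (hasDerivAt_norm_line hs)
  · simp only [NormedSpace.normalize, zero_smul, add_zero, inner_smul_left, conj_trivial]
    ring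
  · have hnorm : HasDerivAt (fun s : ℝ => ‖d + s • ξ‖) (inner ℝ d ξ / ‖d‖) 0 := by
      simpa using hasDerivAt_norm_line (d := d) (ξ := ξ) (s := 0) (by simpa using hd)
    have hf'norm : HasDerivAt (fun s : ℝ => f' ‖d + s • ξ‖) (f'' * (inner ℝ d ξ / ‖d‖)) 0 :=
      HasDerivAt.comp (h₂ := f') 0 (by simpa using hf') hnorm
    have hinner : HasDerivAt (fun s : ℝ => inner ℝ (d + s • ξ) ξ) (‖ξ‖ ^ 2) 0 := by
      simpa using (hasDerivAt_line d ξ 0).inner ℝ (hasDerivAt_const (0 : ℝ) ξ)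
    refine (hf'norm.mul (hinner.div hnorm (by simpa using hn))).congr_deriv ?_
    simp only [inner_radialHess, Pi.div_apply, NormedSpace.normalize, zero_smul, add_zero,
      inner_smul_left, conj_trivial]
    field_simp
    ring

lemma hasDerivAt_const_mul_rpow (k a : ℝ) {t : ℝ} (ht : 0 < t) :
    HasDerivAt (fun t : ℝ => k * t ^ a) (k * a * t ^ (a - 1)) t :=
  ((Real.hasDerivAt_rpow_const (Or.inl ht.ne')).const_mul k).congr_deriv (by ring)

lemma hasLineJet_rpow (k a : ℝ) {x z : E} (h : x ≠ z) :
    HasLineJet (fun y => k * ‖y - z‖ ^ a) x ((k * a * ‖x - z‖ ^ (a - 1)) • normalize (x - z))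
      (radialHess (normalize (x - z)) (k * a * ‖x - z‖ ^ (a - 2))
        (k * a * (a - 2) * ‖x - z‖ ^ (a - 2))) := by
  have hd : 0 < ‖x - z‖ := norm_sub_pos_iff.2 h
  have hj := hasLineJet_radial h
    ((lt_mem_nhds hd).mono fun t ht => hasDerivAt_const_mul_rpow k a ht)
    (hasDerivAt_const_mul_rpow (k * a) (a - 1) hd)
  have hpow : ‖x - z‖ ^ (a - 1) = ‖x - z‖ ^ (a - 2) * ‖x - z‖ := by
    rw [← Real.rpow_add_one hd.ne']
    ring_nf
  have hexp : a - 1 - 1 = a - 2 := by ring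
  have htan : k * a * ‖x - z‖ ^ (a - 1) / ‖x - z‖ = k * a * ‖x - z‖ ^ (a - 2) := by
    rw [hpow]
    field_simp
  rw [htan, hexp] at hj
  convert hj using 2
  ring

end Jets

/-! ### The normalized `p`-Laplacian -/

section PTrace

variable {E : Type*} [NormedAddCommGroup E] [InnerProductSpace ℝ E]

/-- The value `|g|^{2-p} Δ_p` of the normalized `p`-Laplacian on a function with gradient `g` and
Hessian `H`. -/
noncomputable def pTrace (p : ℝ) (g : E) (H : E →L[ℝ] E) : ℝ :=
  LinearMap.trace ℝ E H + (p - 2) * inner ℝ (H (normalize g)) (normalize g)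

lemma pTrace_add (p : ℝ) (g : E) (A B : E →L[ℝ] E) :
    pTrace p g (A + B) = pTrace p g A + pTrace p g B := by
  simp only [pTrace, ContinuousLinearMap.toLinearMap_add, map_add, add_apply, inner_add_left]
  ring

lemma pTrace_smul (p : ℝ) (g : E) (c : ℝ) (A : E →L[ℝ] E) :
    pTrace p g (c • A) = c * pTrace p g A := by
  simp only [pTrace, ContinuousLinearMap.toLinearMap_smul, map_smul, smul_apply, inner_smul_left,
    smul_eq_mul, conj_trivial]
  ring

lemma pTrace_smul_left (p : ℝ) {c : ℝ} (hc : c ≠ 0) (g : E) (A : E →L[ℝ] E) :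
    pTrace p (c • g) A = pTrace p g A := by
  rcases hc.lt_or_gt with hc | hc
  · simp [pTrace, NormedSpace.normalize_smul_of_neg hc]
  · simp [pTrace, NormedSpace.normalize_smul_of_pos hc]

variable {ι : Type*} [Fintype ι] (b : OrthonormalBasis ι ℝ E)

lemma sum_inner_mul_inner_left (x y : E) :
    ∑ i, inner ℝ x (b i) * inner ℝ y (b i) = inner ℝ x y := by
  rw [← b.sum_inner_mul_inner x y]
  simp_rw [real_inner_comm y]

lemma trace_eq_sum_inner_left (A : E →L[ℝ] E) :
    LinearMap.trace ℝ E A = ∑ i, inner ℝ (A (b i)) (b i) := by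
  rw [LinearMap.trace_eq_sum_inner _ b]
  exact Finset.sum_congr rfl fun i _ => real_inner_comm _ _

variable [FiniteDimensional ℝ E]

lemma pTrace_id (p : ℝ) {g : E} (hg : g ≠ 0) :
    pTrace p g (ContinuousLinearMap.id ℝ E) = finrank ℝ E + p - 2 := by
  simp [pTrace, norm_normalize hg]
  ring

/-- The linear stretching of `E` by `1 + c` in the direction of the unit vector `n`. -/
noncomputable def stretch (c : ℝ) (n ξ : E) : E :=
  ξ + (c * inner ℝ n ξ) • n

lemma sum_inner_stretch (A : E →L[ℝ] E) {n : E} (hn : ‖n‖ = 1) (c : ℝ) :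
    ∑ i, inner ℝ (A (stretch c n (b i))) (stretch c n (b i)) =
      LinearMap.trace ℝ E A + ((1 + c) ^ 2 - 1) * inner ℝ (A n) n := by
  have hleft : ∑ i, inner ℝ n (b i) * inner ℝ (A (b i)) n = inner ℝ (A n) n := by
    simp_rw [← ContinuousLinearMap.adjoint_inner_right A, real_inner_comm _ (b _)]
    rw [sum_inner_mul_inner_left, ContinuousLinearMap.adjoint_inner_right]
  have hexpand : ∀ i, inner ℝ (A (stretch c n (b i))) (stretch c n (b i)) =
      inner ℝ (A (b i)) (b i) + c * (inner ℝ n (b i) * inner ℝ (A (b i)) n)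
        + c * (inner ℝ n (b i) * inner ℝ (A n) (b i))
        + (c ^ 2 * inner ℝ (A n) n) * (inner ℝ n (b i) * inner ℝ n (b i)) := by
    intro i
    simp only [stretch, map_add, map_smul, inner_add_left, inner_add_right, inner_smul_left,
      inner_smul_right, conj_trivial]
    ring
  simp_rw [hexpand, Finset.sum_add_distrib, ← Finset.mul_sum, hleft, sum_inner_mul_inner_left,
    ← trace_eq_sum_inner_left, real_inner_self_eq_norm_sq, hn, real_inner_comm (A n) n]
  ring

lemma pTrace_eq_sum_inner_stretch {p c : ℝ} (hc : (1 + c) ^ 2 = p - 1) {g : E} (hg : g ≠ 0)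
    (A : E →L[ℝ] E) : pTrace p g A =
      ∑ i, inner ℝ (A (stretch c (normalize g) (b i))) (stretch c (normalize g) (b i)) := by
  rw [sum_inner_stretch b A (norm_normalize hg), hc, pTrace]
  ring

lemma pTrace_mono {p : ℝ} (hp : 1 ≤ p) {g : E} (hg : g ≠ 0) {A B : E →L[ℝ] E}
    (h : ∀ ξ, inner ℝ (A ξ) ξ ≤ inner ℝ (B ξ) ξ) : pTrace p g A ≤ pTrace p g B := by
  have hc : (1 + (√(p - 1) - 1)) ^ 2 = p - 1 := by
    rw [add_sub_cancel, Real.sq_sqrt (by linarith)]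
  rw [pTrace_eq_sum_inner_stretch (stdOrthonormalBasis ℝ E) hc hg,
    pTrace_eq_sum_inner_stretch (stdOrthonormalBasis ℝ E) hc hg]
  exact Finset.sum_le_sum fun i _ => h _

lemma pTrace_radialHess (p : ℝ) {d g : E} (hd : ‖d‖ = 1) (hg : g ≠ 0) (a b : ℝ) :
    pTrace p g (radialHess d a b) =
      a * (finrank ℝ E + p - 2) + b * (1 + (p - 2) * Real.cos (angle d g) ^ 2) := by
  have htrace : LinearMap.trace ℝ E (radialHess d a b) = a * finrank ℝ E + b := by
    simp [radialHess, InnerProductSpace.trace_rankOne, hd]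
  rw [pTrace, htrace, inner_radialHess, norm_normalize hg,
    InnerProductGeometry.inner_eq_cos_angle_of_norm_eq_one hd (norm_normalize hg),
    InnerProductGeometry.angle_normalize_right]
  ring

lemma pTrace_radialHess_self (p : ℝ) {d : E} (hd : ‖d‖ = 1) (a b : ℝ) :
    pTrace p d (radialHess d a b) = a * (finrank ℝ E + p - 2) + b * (p - 1) := by
  have hd0 : d ≠ 0 := by
    rintro rfl
    simp at hd
  rw [pTrace_radialHess p hd hd0, InnerProductGeometry.angle_self hd0, Real.cos_zero]
  ring

end PTrace

/-! ### Solutions and comparison with radial barriers -/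

section Annulus

variable {E : Type*} [NormedAddCommGroup E]

/-- The closed annulus `a ≤ |x - z| ≤ b`. -/
def annulus (z : E) (a b : ℝ) : Set E := {x | a ≤ ‖x - z‖ ∧ ‖x - z‖ ≤ b}

lemma annulus_mem_nhds {z x : E} {a b : ℝ} (ha : a < ‖x - z‖) (hb : ‖x - z‖ < b) :
    annulus z a b ∈ 𝓝 x := by
  have hc : ContinuousAt (fun y : E => ‖y - z‖) x := by fun_prop
  filter_upwards [hc.eventually_const_lt ha, hc.eventually_lt_const hb] with y hya hyb
  exact ⟨hya.le, hyb.le⟩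

lemma isCompact_annulus [ProperSpace E] (z : E) (a b : ℝ) : IsCompact (annulus z a b) := by
  have hc : Continuous fun x : E => ‖x - z‖ := by fun_prop
  refine (isCompact_closedBall z b).of_isClosed_subset
    ((isClosed_le continuous_const hc).inter (isClosed_le hc continuous_const)) fun x hx => ?_
  exact mem_closedBall_iff_norm.2 hx.2

end Annulus

section Comparison

variable {E : Type*} [NormedAddCommGroup E] [InnerProductSpace ℝ E] [FiniteDimensional ℝ E]
  {p γ σ : ℝ} {w v : E → ℝ}

/-- `w` solves `|∇w|^{2-p} Δ_p w = σ |∇w|^γ` at `x`, as a condition on the jet of `w`. Nothing is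
required at critical points beyond differentiability. -/
def SolAt (p γ σ : ℝ) (w : E → ℝ) (x : E) : Prop :=
  DifferentiableAt ℝ w x ∧ (gradient w x ≠ 0 → ∃ H : E →L[ℝ] E,
    HasLineJet w x (gradient w x) H ∧ pTrace p (gradient w x) H = σ * ‖gradient w x‖ ^ γ)

lemma hasDerivAt_comp_line {x : E} (h : DifferentiableAt ℝ w x) (ξ : E) :
    HasDerivAt (fun s : ℝ => w (x + s • ξ)) (inner ℝ (gradient w x) ξ) 0 := by
  have hw : HasFDerivAt w (fderiv ℝ w x) (x + (0 : ℝ) • ξ) := by simpa using h.hasFDerivAt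
  have hcomp := hw.comp_hasDerivAt 0 (hasDerivAt_line x ξ 0)
  rwa [← inner_gradient_left] at hcomp

lemma SolAt.neg {x : E} (hw : SolAt p γ σ w x) : SolAt p γ (-σ) (fun y => -w y) x := by
  obtain ⟨hdiff, hjet⟩ := hw
  have hgrad : gradient (fun y => -w y) x = -gradient w x :=
    HasGradientAt.gradient (by
      rw [hasGradientAt_iff_hasFDerivAt, map_neg]
      exact (hasGradientAt_iff_hasFDerivAt.1 hdiff.hasGradientAt).neg)
  refine ⟨hdiff.neg, fun hne => ?_⟩
  rw [hgrad] at hne ⊢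
  obtain ⟨H, hH, htrace⟩ := hjet (neg_ne_zero.1 hne)
  refine ⟨(-1 : ℝ) • H, by simpa using hH.const_mul (-1), ?_⟩
  rw [← neg_one_smul ℝ, pTrace_smul_left p (by norm_num), pTrace_smul, htrace, norm_smul]
  simp

lemma SolAt.le_pTrace_of_isLocalMax_sub (hp : 1 ≤ p) {x P : E} {B : E →L[ℝ] E}
    (hw : SolAt p γ σ w x) (hv : HasLineJet v x P B) (hP : P ≠ 0)
    (hmax : IsLocalMax (fun y => w y - v y) x) : σ * ‖P‖ ^ γ ≤ pTrace p P B := by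
  obtain ⟨hdiff, hjet⟩ := hw
  have hgrad : gradient w x = P := by
    refine ext_inner_right ℝ fun ξ => sub_eq_zero.1 ?_
    exact (isLocalMax_comp_line hmax ξ).hasDerivAt_eq_zero
      ((hasDerivAt_comp_line hdiff ξ).sub (hv ξ).hasDerivAt)
  rw [hgrad] at hjet
  obtain ⟨H, hH, htrace⟩ := hjet hP
  rw [← htrace]
  exact pTrace_mono hp hP fun ξ => sub_nonpos.1
    (((hH ξ).sub (hv ξ)).nonpos_of_isLocalMax (isLocalMax_comp_line hmax ξ))

lemma le_of_strict_supersolution_annulus (hp : 1 ≤ p) {z : E} {a b : ℝ}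
    (hw : ∀ x ∈ annulus z a b, SolAt p γ σ w x) (hv : ContinuousOn v (annulus z a b))
    (hjet : ∀ x, a < ‖x - z‖ → ‖x - z‖ < b →
      ∃ P B, HasLineJet v x P B ∧ P ≠ 0 ∧ pTrace p P B < σ * ‖P‖ ^ γ)
    (ha : ∀ x, ‖x - z‖ = a → w x ≤ v x) (hb : ∀ x, ‖x - z‖ = b → w x ≤ v x) :
    ∀ x ∈ annulus z a b, w x ≤ v x := by
  intro x hx
  have hcont : ContinuousOn (fun y => w y - v y) (annulus z a b) :=
    ContinuousOn.sub (fun y hy => (hw y hy).1.continuousAt.continuousWithinAt) hv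
  obtain ⟨y, hy, hmax⟩ := (isCompact_annulus z a b).exists_isMaxOn ⟨x, hx⟩ hcont
  suffices hle : w y ≤ v y by
    have : w x - v x ≤ w y - v y := hmax hx
    linarith
  rcases hy.1.eq_or_lt with hya | hya
  · exact ha y hya.symm
  rcases hy.2.eq_or_lt with hyb | hyb
  · exact hb y hyb
  obtain ⟨P, B, hj, hP, hlt⟩ := hjet y hya hyb
  have hloc := hmax.isLocalMax (annulus_mem_nhds hya hyb)
  exact absurd ((hw y hy).le_pTrace_of_isLocalMax_sub hp hj hP hloc) (not_le.2 hlt)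

lemma le_of_strict_radial_supersolution (hp : 1 ≤ p) {a b : ℝ} (ha0 : 0 < a)
    (hw : ∀ x ∈ annulus (0 : E) a b, SolAt p γ σ w x) {f f' f'' : ℝ → ℝ}
    (hf : ∀ t, a ≤ t → HasDerivAt f (f' t) t) (hf' : ∀ t, a < t → HasDerivAt f' (f'' t) t)
    (hne : ∀ t, a < t → t < b → f' t ≠ 0)
    (hlt : ∀ t, a < t → t < b → (finrank ℝ E - 1) * (f' t / t) + (p - 1) * f'' t < σ * |f' t| ^ γ)
    (ha : ∀ x : E, ‖x‖ = a → w x ≤ f a) (hb : ∀ x : E, ‖x‖ = b → w x ≤ f b) :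
    ∀ x : E, a ≤ ‖x‖ → ‖x‖ ≤ b → w x ≤ f ‖x‖ := by
  intro x hxa hxb
  have hcomp := le_of_strict_supersolution_annulus (z := 0) (v := fun y => f ‖y - 0‖) hp hw
    ?_ ?_ ?_ ?_ x ⟨by simpa using hxa, by simpa using hxb⟩
  · simpa using hcomp
  · intro y hy
    exact (ContinuousAt.comp (f := fun y : E => ‖y - 0‖)
      (hf _ hy.1).continuousAt (by fun_prop)).continuousWithinAt
  · intro y hya hyb
    have hy0 : 0 < ‖y - 0‖ := ha0.trans hya
    have hy : y - 0 ≠ 0 := norm_pos_iff.1 hy0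
    have hf'y := hne _ hya hyb
    refine ⟨_, _, hasLineJet_radial (sub_ne_zero.1 hy)
      ((lt_mem_nhds hya).mono fun t ht => hf t ht.le) (hf' _ hya),
      smul_ne_zero hf'y (by simpa using hy), ?_⟩
    rw [pTrace_smul_left p hf'y, pTrace_radialHess_self p (norm_normalize hy), norm_smul,
      norm_normalize hy, mul_one, Real.norm_eq_abs]
    linarith [hlt _ hya hyb]
  · intro y hy
    simpa [← hy] using ha y (by simpa using hy)
  · intro y hy
    simpa [← hy] using hb y (by simpa using hy)

end Comparison

/-! ### Interior Hölder estimate -/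

lemma eventually_rpow_add_lt_mul_sq {γ d : ℝ} (hγ : γ < 2) (hd : 0 < d) (a b : ℝ) :
    ∀ᶠ t : ℝ in atTop, a * t ^ γ + b < d * t ^ 2 := by
  have hlim : Tendsto (fun t : ℝ => a * t ^ (-(2 - γ)) + b * t ^ (-(2 : ℝ))) atTop
      (𝓝 (a * 0 + b * 0)) :=
    ((tendsto_rpow_neg_atTop (by linarith)).const_mul _).add
      ((tendsto_rpow_neg_atTop (by norm_num)).const_mul _)
  filter_upwards [hlim.eventually_lt_const (by simpa using hd), eventually_gt_atTop 0] with t h ht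
  have hsplit : a * t ^ (-(2 - γ)) + b * t ^ (-(2 : ℝ)) = (a * t ^ γ + b) / t ^ 2 := by
    rw [neg_sub, Real.rpow_sub ht, Real.rpow_neg ht.le, Real.rpow_two]
    ring
  rwa [hsplit, div_lt_iff₀ (by positivity)] at h

lemma exists_forall_lt_mul {γ d : ℝ} (hγ : γ < 2) (hd : 0 < d) (Λ C D : ℝ) :
    ∃ l₀, 4 < l₀ ∧ ∀ l m, l₀ ≤ l → 4 * l ^ 2 ≤ m →
      m * (16 / l ^ 2) * C + Λ * (2 * l) ^ γ + D < m * d := by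
  obtain ⟨l₀, hl₀⟩ := eventually_atTop.1 ((eventually_gt_atTop 4).and
    ((eventually_rpow_add_lt_mul_sq hγ (mul_pos two_pos hd) (Λ * 2 ^ γ) D).and
      (eventually_rpow_add_lt_mul_sq hγ hd 0 (32 * C))))
  refine ⟨l₀, (hl₀ l₀ le_rfl).1, fun l m hl hm => ?_⟩
  obtain ⟨hl4, hrpow, hC⟩ := hl₀ l hl
  have hl2 : 0 < l ^ 2 := by positivity
  have hhalf : 16 / l ^ 2 * C ≤ d / 2 := by
    rw [div_mul_eq_mul_div, div_le_iff₀ hl2]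
    linarith
  rw [Real.mul_rpow two_pos.le (by linarith), ← mul_assoc]
  nlinarith [mul_le_mul_of_nonneg_left hhalf (hl2.le.trans (by linarith : l ^ 2 ≤ m))]

lemma abs_mul_rpow_sub_rpow_le {γ σ Λ s t M : ℝ} (hγ : 0 ≤ γ) (hσ : |σ| ≤ Λ) (hs : 0 ≤ s)
    (hsM : s ≤ M) (ht : 0 ≤ t) (htM : t ≤ M) : |σ * s ^ γ - σ * t ^ γ| ≤ Λ * M ^ γ := by
  have hs' := Real.rpow_le_rpow hs hsM hγ
  have ht' := Real.rpow_le_rpow ht htM hγ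
  have hs0 : 0 ≤ s ^ γ := by positivity
  have ht0 : 0 ≤ t ^ γ := by positivity
  rw [← mul_sub, abs_mul]
  exact mul_le_mul hσ (abs_le.2 ⟨by linarith, by linarith⟩) (abs_nonneg _)
    ((abs_nonneg σ).trans hσ)

/-- The penalized difference of two values of `w`. At an interior maximum off the diagonal the
second derivative of the square root is too negative for `w` to be a solution. -/
noncomputable def doubling {E : Type*} [NormedAddCommGroup E] (w : E → ℝ) (x₀ : E) (L : ℝ)
    (z : E × E) : ℝ :=
  w z.1 - w z.2 - L * ‖z.1 - z.2‖ ^ (1 / 2 : ℝ) - 4 * ‖z.1 - x₀‖ ^ 2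

lemma continuousOn_doubling {E : Type*} [NormedAddCommGroup E] {w : E → ℝ} {s : Set E} (x₀ : E)
    (L : ℝ) (hw : ContinuousOn w s) : ContinuousOn (doubling w x₀ L) (s ×ˢ s) := by
  have hroot : ContinuousOn (fun z : E × E => ‖z.1 - z.2‖ ^ (1 / 2 : ℝ)) (s ×ˢ s) :=
    (by fun_prop : ContinuousOn (fun z : E × E => ‖z.1 - z.2‖) _).rpow_const
      fun _ _ => Or.inr (by norm_num)
  exact (((hw.comp continuousOn_fst fun z hz => hz.1).sub
    (hw.comp continuousOn_snd fun z hz => hz.2)).sub (hroot.const_mul L)).sub (by fun_prop)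

section Hölder

variable {E : Type*} [NormedAddCommGroup E] [InnerProductSpace ℝ E]

lemma norm_mul_sin_angle_le (x y : E) : ‖x‖ * Real.sin (angle x y) ≤ ‖x - y‖ := by
  rw [mul_comm, InnerProductGeometry.sin_angle_mul_norm_eq_sin_angle_mul_norm]
  exact mul_le_of_le_one_left (norm_nonneg _) (Real.sin_le_one _)

lemma one_sub_inner_normalize_sq {x y : E} (hx : x ≠ 0) (hy : y ≠ 0) :
    1 - inner ℝ (normalize x) (normalize y) ^ 2 = Real.sin (angle x y) ^ 2 := by
  rw [InnerProductGeometry.inner_eq_cos_angle_of_norm_eq_one (norm_normalize hx)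
    (norm_normalize hy), InnerProductGeometry.angle_normalize_left,
    InnerProductGeometry.angle_normalize_right, Real.sin_sq]

lemma one_sub_inner_normalize_sq_le {x y : E} (hx : x ≠ 0) (hy : y ≠ 0) :
    1 - inner ℝ (normalize x) (normalize y) ^ 2 ≤ (‖x - y‖ / ‖x‖) ^ 2 := by
  rw [one_sub_inner_normalize_sq hx hy]
  refine pow_le_pow_left₀ (InnerProductGeometry.sin_angle_nonneg _ _) ?_ 2
  rw [le_div_iff₀' (norm_pos_iff.2 hx)]
  exact norm_mul_sin_angle_le x y

lemma sum_radialHess_stretch_sub {ι : Type*} [Fintype ι] (v : OrthonormalBasis ι ℝ E) {m n : E}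
    (hm : ‖m‖ = 1) (hn : ‖n‖ = 1) (a b c : ℝ) :
    ∑ i, inner ℝ (radialHess n a b (stretch c m (v i) - stretch (-(2 + c)) n (v i)))
        (stretch c m (v i) - stretch (-(2 + c)) n (v i)) =
      a * (c ^ 2 + (2 + c) ^ 2 + 2 * c * (2 + c) * inner ℝ n m ^ 2) +
        b * (c ^ 2 * inner ℝ n m ^ 2 + (2 + c) ^ 2 + 2 * c * (2 + c) * inner ℝ n m ^ 2) := by
  have hsub : ∀ ξ, stretch c m ξ - stretch (-(2 + c)) n ξ =
      (c * inner ℝ m ξ) • m + ((2 + c) * inner ℝ n ξ) • n := fun ξ => by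
    simp only [stretch]
    module
  have hexpand : ∀ i, inner ℝ (radialHess n a b (stretch c m (v i) - stretch (-(2 + c)) n (v i)))
        (stretch c m (v i) - stretch (-(2 + c)) n (v i)) =
      (c ^ 2 * (a + b * inner ℝ n m ^ 2)) * (inner ℝ m (v i) * inner ℝ m (v i))
      + (2 * c * (2 + c) * inner ℝ n m * (a + b)) * (inner ℝ n (v i) * inner ℝ m (v i))
      + ((2 + c) ^ 2 * (a + b)) * (inner ℝ n (v i) * inner ℝ n (v i)) := by
    intro i
    rw [inner_radialHess, hsub, norm_add_sq_real]
    simp only [norm_smul, inner_add_right, inner_smul_left, inner_smul_right, conj_trivial,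
      real_inner_self_eq_norm_sq, hn, hm, real_inner_comm n m, mul_one, Real.norm_eq_abs, sq_abs]
    ring
  simp_rw [hexpand, Finset.sum_add_distrib, ← Finset.mul_sum, sum_inner_mul_inner_left,
    real_inner_self_eq_norm_sq, hn, hm]
  ring

lemma hasLineJet_mul_sqrt_norm (L : ℝ) {d : E} (hd : d ≠ 0) {s : ℝ} (hs : ‖d‖ ^ (1 / 2 : ℝ) = s) :
    HasLineJet (fun z => L * ‖z‖ ^ (1 / 2 : ℝ)) d ((L / (2 * s)) • normalize d)
      (radialHess (normalize d) (L / s ^ 3 / 2) (-(3 / 4 * (L / s ^ 3)))) := by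
  have hinv : ‖d‖ ^ (1 / 2 - 1 : ℝ) = s⁻¹ := by
    rw [← hs, ← Real.rpow_neg (norm_nonneg _)]
    norm_num
  have hinv_cube : ‖d‖ ^ (1 / 2 - 2 : ℝ) = (s ^ 3)⁻¹ := by
    rw [← hs, ← Real.rpow_mul_natCast (norm_nonneg _), ← Real.rpow_neg (norm_nonneg _)]
    norm_num
  have hjet := hasLineJet_rpow L (1 / 2) hd
  simp only [sub_zero, hinv, hinv_cube] at hjet
  convert hjet using 2 <;> ring

variable [FiniteDimensional ℝ E] {p γ σ c : ℝ} {w : E → ℝ}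

/-- The Ishii–Lions inequality: the second-order condition at the maximum is tested along pairs of
directions, stretched by `1 + c` at `x` and by `-(1 + c)` at `y`. -/
lemma SolAt.doubling_inequality (hc : (1 + c) ^ 2 = p - 1) {Θ Ψ : E → ℝ} {x y q g : E}
    {Z K : E →L[ℝ] E} (hx : SolAt p γ σ w x) (hy : SolAt p γ σ w y)
    (hΘ : HasLineJet Θ (x - y) q Z) (hΨ : HasLineJet Ψ x g K)
    (hmax : IsLocalMax (fun z : E × E => w z.1 - w z.2 - Θ (z.1 - z.2) - Ψ z.1) (x, y))
    (hq : q ≠ 0) (hP : q + g ≠ 0) {ι : Type*} [Fintype ι] (v : OrthonormalBasis ι ℝ E) :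
    σ * ‖q + g‖ ^ γ - σ * ‖q‖ ^ γ ≤
      ∑ i, inner ℝ
        (Z (stretch c (normalize (q + g)) (v i) - stretch (-(2 + c)) (normalize q) (v i)))
        (stretch c (normalize (q + g)) (v i) - stretch (-(2 + c)) (normalize q) (v i))
      + pTrace p (q + g) K := by
  have hlines : ∀ ξ η : E, IsLocalMax (fun s : ℝ => w (x + s • ξ) - w (y + s • η)
      - Θ (x - y + s • (ξ - η)) - Ψ (x + s • ξ)) 0 := by
    intro ξ η
    simpa only [Prod.smul_mk, Prod.mk_add_mk, add_sub_add_comm, ← smul_sub] using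
      isLocalMax_comp_line hmax (ξ, η)
  have hfirst : ∀ ξ η : E, inner ℝ (gradient w x) ξ - inner ℝ (gradient w y) η
      - inner ℝ q (ξ - η) - inner ℝ g ξ = 0 := fun ξ η =>
    (hlines ξ η).hasDerivAt_eq_zero ((((hasDerivAt_comp_line hx.1 ξ).sub
      (hasDerivAt_comp_line hy.1 η)).sub (hΘ (ξ - η)).hasDerivAt).sub (hΨ ξ).hasDerivAt)
  have hgy : gradient w y = q := ext_inner_right ℝ fun η => by
    have := hfirst 0 η
    simp only [inner_zero_right, zero_sub, inner_neg_right] at this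
    linarith
  have hgx : gradient w x = q + g := ext_inner_right ℝ fun ξ => by
    have := hfirst ξ 0
    simp only [inner_zero_right, sub_zero] at this
    rw [inner_add_left]
    linarith
  obtain ⟨A, hA, htrA⟩ := hx.2 (hgx ▸ hP)
  obtain ⟨B, hB, htrB⟩ := hy.2 (hgy ▸ hq)
  rw [hgx] at htrA
  rw [hgy] at htrB
  have hsecond : ∀ ξ η : E, inner ℝ (A ξ) ξ - inner ℝ (B η) η
      ≤ inner ℝ (Z (ξ - η)) (ξ - η) + inner ℝ (K ξ) ξ := fun ξ η => by
    have := ((((hA ξ).sub (hB η)).sub (hΘ (ξ - η))).sub (hΨ ξ)).nonpos_of_isLocalMax (hlines ξ η)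
    linarith
  have hc' : (1 + -(2 + c)) ^ 2 = p - 1 := by linear_combination hc
  rw [← htrA, ← htrB, pTrace_eq_sum_inner_stretch v hc hP, pTrace_eq_sum_inner_stretch v hc' hq,
    pTrace_eq_sum_inner_stretch v hc hP, ← Finset.sum_sub_distrib, ← Finset.sum_add_distrib]
  exact Finset.sum_le_sum fun i _ => hsecond _ _

lemma exists_isLocalMax_doubling {x₀ y₀ : E} {L : ℝ} (hL : 8 ≤ L)
    (hw : ContinuousOn w (closedBall x₀ 1))
    (hosc : ∀ x ∈ closedBall x₀ 1, ∀ y ∈ closedBall x₀ 1, w x - w y ≤ 1)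
    (hy₀ : y₀ ∈ closedBall x₀ 1) (hfail : L * ‖x₀ - y₀‖ ^ (1 / 2 : ℝ) < w x₀ - w y₀) :
    ∃ x y, x ≠ y ∧ ‖x - x₀‖ < 1 / 2 ∧ ‖y - x₀‖ < 1 ∧ L * ‖x - y‖ ^ (1 / 2 : ℝ) < 1 ∧
      IsLocalMax (doubling w x₀ L) (x, y) := by
  have hx₀ : x₀ ∈ closedBall x₀ 1 := mem_closedBall_self zero_le_one
  obtain ⟨⟨x, y⟩, ⟨hx, hy⟩, hmax⟩ :=
    ((isCompact_closedBall x₀ 1).prod (isCompact_closedBall x₀ 1)).exists_isMaxOn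
      ⟨(x₀, y₀), hx₀, hy₀⟩ (continuousOn_doubling x₀ L hw)
  have hpos : 0 < doubling w x₀ L (x, y) := by
    refine lt_of_lt_of_le ?_ (hmax (show (x₀, y₀) ∈ _ from ⟨hx₀, hy₀⟩))
    simpa [doubling] using hfail
  simp only [doubling] at hpos
  have hosc_xy := hosc x hx y hy
  have hdist : 0 ≤ L * ‖x - y‖ ^ (1 / 2 : ℝ) := by positivity
  have hxy : x ≠ y := by
    rintro rfl
    linarith [sq_nonneg ‖x - x₀‖]
  have hxx₀ : ‖x - x₀‖ < 1 / 2 := by nlinarith [norm_nonneg (x - x₀)]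
  have hsmall : L * ‖x - y‖ ^ (1 / 2 : ℝ) < 1 := by linarith [sq_nonneg ‖x - x₀‖]
  have hyy₀ : ‖y - x₀‖ < 1 := by
    have hsq : (‖x - y‖ ^ (1 / 2 : ℝ)) ^ 2 = ‖x - y‖ := by
      rw [← Real.rpow_mul_natCast (norm_nonneg _)]
      norm_num
    have hroot : 0 ≤ ‖x - y‖ ^ (1 / 2 : ℝ) := by positivity
    have htri := norm_sub_le_norm_sub_add_norm_sub y x x₀
    rw [norm_sub_rev y x] at htri
    nlinarith
  refine ⟨x, y, hxy, hxx₀, hyy₀, hsmall, hmax.isLocalMax (prod_mem_nhds ?_ ?_)⟩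
  · exact closedBall_mem_nhds_of_mem (by rw [mem_ball_iff_norm]; linarith)
  · exact closedBall_mem_nhds_of_mem (by rwa [mem_ball_iff_norm])

lemma SolAt.doubling_inequality_radial {Λ l m : ℝ} (hc : (1 + c) ^ 2 = p - 1) (hγ : 0 ≤ γ)
    (hσ : |σ| ≤ Λ) (hl : 4 < l) (hm : 0 ≤ m) {Θ Ψ : E → ℝ} {x y n g : E} (hn : ‖n‖ = 1)
    (hg : ‖g‖ ≤ 4) (hx : SolAt p γ σ w x) (hy : SolAt p γ σ w y)
    (hΘ : HasLineJet Θ (x - y) (l • n) (radialHess n (m / 2) (-(3 / 4 * m))))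
    (hΨ : HasLineJet Ψ x g ((8 : ℝ) • ContinuousLinearMap.id ℝ E))
    (hmax : IsLocalMax (fun z : E × E => w z.1 - w z.2 - Θ (z.1 - z.2) - Ψ z.1) (x, y)) :
    m * (p - 1) ≤ m * (16 / l ^ 2) * (3 / 4 * c ^ 2 + 1 / 2 * |c * (2 + c)|)
      + Λ * (2 * l) ^ γ + 8 * (finrank ℝ E + p - 2) := by
  have hl0 : 0 < l := by linarith
  have hq : l • n ≠ 0 := smul_ne_zero hl0.ne' (norm_ne_zero_iff.1 (by simp [hn]))
  have hql : ‖l • n‖ = l := by rw [norm_smul, hn, mul_one, Real.norm_of_nonneg hl0.le]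
  have hdir : normalize (l • n) = n := by
    rw [NormedSpace.normalize, hql, smul_smul, inv_mul_cancel₀ hl0.ne', one_smul]
  generalize l • n = q at *
  have hP : q + g ≠ 0 := fun h => by
    rw [eq_neg_of_add_eq_zero_left h, norm_neg] at hql
    linarith
  have hPl : ‖q + g‖ ≤ 2 * l := by linarith [norm_add_le q g]
  have hmain := hx.doubling_inequality hc hy hΘ hΨ hmax hq hP (stdOrthonormalBasis ℝ E)
  rw [hdir, sum_radialHess_stretch_sub _ (norm_normalize hP) hn, pTrace_smul, pTrace_id p hP]
    at hmain
  have hrhs := (abs_le.1 (abs_mul_rpow_sub_rpow_le hγ hσ (norm_nonneg (q + g)) hPl (norm_nonneg q)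
    (by linarith))).1
  set t := inner ℝ n (normalize (q + g)) with ht
  have hnonneg : 0 ≤ 1 - t ^ 2 := by
    rw [ht, ← hdir, one_sub_inner_normalize_sq hq hP]
    positivity
  have hangle : 1 - t ^ 2 ≤ 16 / l ^ 2 := by
    rw [ht, ← hdir]
    refine (one_sub_inner_normalize_sq_le hq hP).trans ?_
    rw [sub_add_cancel_left, norm_neg, hql, div_pow]
    gcongr
    linarith [pow_le_pow_left₀ (norm_nonneg g) hg 2]
  have herror : (1 - t ^ 2) * (3 / 4 * c ^ 2 + 1 / 2 * (c * (2 + c))) ≤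
      16 / l ^ 2 * (3 / 4 * c ^ 2 + 1 / 2 * |c * (2 + c)|) :=
    (mul_le_mul_of_nonneg_left (by linarith [le_abs_self (c * (2 + c))]) hnonneg).trans
      (mul_le_mul_of_nonneg_right hangle (by positivity))
  linear_combination hmain + hrhs + m * herror - m * hc

theorem exists_holder_estimate (E : Type*) [NormedAddCommGroup E] [InnerProductSpace ℝ E]
    [FiniteDimensional ℝ E] {p γ : ℝ} (hp : 1 < p) (hγ₀ : 0 ≤ γ) (hγ : γ < 2) (Λ : ℝ) :
    ∃ L : ℝ, 0 < L ∧ ∀ (w : E → ℝ) (σ : ℝ) (x₀ : E), |σ| ≤ Λ →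
      (∀ x ∈ closedBall x₀ 1, SolAt p γ σ w x) →
      (∀ x ∈ closedBall x₀ 1, ∀ y ∈ closedBall x₀ 1, w x - w y ≤ 1) →
      ∀ y ∈ closedBall x₀ 1, w x₀ - w y ≤ L * ‖x₀ - y‖ ^ (1 / 2 : ℝ) := by
  set c := √(p - 1) - 1 with hc
  have hc1 : (1 + c) ^ 2 = p - 1 := by
    rw [hc, add_sub_cancel, Real.sq_sqrt (by linarith)]
  obtain ⟨l₀, hl₀, hlarge⟩ := exists_forall_lt_mul hγ (sub_pos.2 hp) Λ
    (3 / 4 * c ^ 2 + 1 / 2 * |c * (2 + c)|) (8 * (finrank ℝ E + p - 2))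
  refine ⟨2 * l₀, by linarith, fun w σ x₀ hσ hw hosc y₀ hy₀ => ?_⟩
  by_contra! hfail
  obtain ⟨x, y, hxy, hxx₀, hyy₀, hsmall, hmax⟩ := exists_isLocalMax_doubling (by linarith)
    (fun x hx => (hw x hx).1.continuousAt.continuousWithinAt) hosc hy₀ hfail
  have hxy0 : x - y ≠ 0 := sub_ne_zero.2 hxy
  set s := ‖x - y‖ ^ (1 / 2 : ℝ) with hs
  have hs0 : 0 < s := Real.rpow_pos_of_pos (norm_pos_iff.2 hxy0) _
  have hl : l₀ ≤ 2 * l₀ / (2 * s) := by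
    rw [le_div_iff₀ (mul_pos two_pos hs0)]
    nlinarith
  have hm : 4 * (2 * l₀ / (2 * s)) ^ 2 ≤ 2 * l₀ / s ^ 3 := by
    rw [div_pow, ← mul_div_assoc, div_le_div_iff₀ (by positivity) (by positivity)]
    have : 0 ≤ 8 * l₀ * s ^ 2 := by positivity
    nlinarith
  have hpenalty : HasLineJet (fun z => 4 * ‖z - x₀‖ ^ 2) x ((8 : ℝ) • (x - x₀))
      ((8 : ℝ) • ContinuousLinearMap.id ℝ E) := by
    convert (hasLineJet_norm_sq x x₀).const_mul 4 using 1 <;> norm_num [smul_smul]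
  have hgrad : ‖(8 : ℝ) • (x - x₀)‖ ≤ 4 := by
    rw [norm_smul]
    norm_num
    linarith
  refine (hlarge _ _ hl hm).not_ge ?_
  exact SolAt.doubling_inequality_radial hc1 hγ₀ hσ (by linarith) (by positivity)
    (norm_normalize hxy0) hgrad (hw x (mem_closedBall_iff_norm.2 (by linarith)))
    (hw y (mem_closedBall_iff_norm.2 hyy₀.le)) (hasLineJet_mul_sqrt_norm _ hxy0 hs.symm)
    hpenalty hmax

end Hölder

/-! ### Propagation of a strict gap below the fundamental profile -/

section Gap

section

variable {E : Type*} [NormedAddCommGroup E]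

lemma neg_mul_norm_le_mul_norm_add_rpow {γ σ Λ : ℝ} {Q R : E} (hγ : 1 ≤ γ) (hσ : |σ| ≤ Λ)
    (hQ : Q = 0 ∨ 0 ≤ σ) (hR : ‖R‖ ≤ 1) : -(Λ * ‖R‖) ≤ σ * ‖Q + R‖ ^ γ := by
  rcases hQ with rfl | hσ0
  · rw [zero_add, ← neg_mul]
    rcases (norm_nonneg R).eq_or_lt with h0 | h0
    · rw [← h0, Real.zero_rpow (by linarith), mul_zero, mul_zero]
    have hpow : ‖R‖ ^ γ ≤ ‖R‖ := by simpa using Real.rpow_le_rpow_of_exponent_ge h0 hR hγ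
    have hpow0 : 0 ≤ ‖R‖ ^ γ := by positivity
    nlinarith [(abs_le.1 hσ).1, abs_nonneg σ]
  · have : 0 ≤ Λ * ‖R‖ := mul_nonneg ((abs_nonneg σ).trans hσ) (norm_nonneg R)
    have : 0 ≤ σ * ‖Q + R‖ ^ γ := by positivity
    linarith

lemma mem_annulus_one_three {x y : E} {r : ℝ} (hx : 1 + r ≤ ‖x‖) (hx' : ‖x‖ ≤ 3 - r)
    (hy : ‖y - x‖ ≤ r) : y ∈ annulus (0 : E) 1 3 := by
  have hle := norm_le_norm_add_norm_sub' y x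
  have hge := norm_le_norm_add_norm_sub y x
  constructor <;> rw [sub_zero] <;> linarith

/-- On `s`, the function `w` stays at least `δ` below the fundamental profile `κ|x|^{-τ} + ε`. -/
def HasGapOn (τ κ ε δ : ℝ) (w : E → ℝ) (s : Set E) : Prop :=
  ∀ y ∈ s, w y ≤ κ * ‖y‖ ^ (-τ) + ε - δ

/-- The fundamental profile lowered by a bump which is concentrated at `z` and vanishes on the
sphere of radius `3ρ`. -/
noncomputable def bumpBarrier (τ κ ε α η ρ : ℝ) (z y : E) : ℝ :=
  κ * ‖y‖ ^ (-τ) + ε + (-η * ‖y - z‖ ^ (-α) + η * (3 * ρ) ^ (-α))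

lemma continuousAt_bumpBarrier {τ κ ε α η ρ : ℝ} {z y : E} (hy : y ≠ 0) (hyz : y ≠ z) :
    ContinuousAt (bumpBarrier τ κ ε α η ρ z) y := by
  have hpow : ∀ x : E, y ≠ x → ∀ a : ℝ, ContinuousAt (fun v : E => ‖v - x‖ ^ a) y :=
    fun x hx a => ContinuousAt.rpow_const (by fun_prop)
      (Or.inl (norm_ne_zero_iff.2 (sub_ne_zero.2 hx)))
  exact ((continuousAt_const.mul (by simpa using hpow 0 hy (-τ))).add continuousAt_const).add
    ((continuousAt_const.mul (hpow z hyz _)).add continuousAt_const)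

lemma exists_chain {ι : Type*} (G : ι → ℝ → E → Prop) (good : E → Prop) {ρ : ℝ}
    (hstep : ∀ δ > 0, ∃ δ' > 0, ∀ i z, good z → G i δ z → ∀ z', ‖z' - z‖ ≤ ρ → G i δ' z')
    (n : ℕ) : ∀ δ > 0, ∃ δ' > 0, ∀ i, ∀ c : ℕ → E,
      (∀ k < n, good (c k) ∧ ‖c (k + 1) - c k‖ ≤ ρ) → G i δ (c 0) → G i δ' (c n) := by
  induction n with
  | zero => exact fun δ hδ => ⟨δ, hδ, fun i c _ h => h⟩
  | succ n ih =>
    intro δ hδ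
    obtain ⟨δ₁, hδ₁, hfirst⟩ := ih δ hδ
    obtain ⟨δ₂, hδ₂, hlast⟩ := hstep δ₁ hδ₁
    refine ⟨δ₂, hδ₂, fun i c hc h => ?_⟩
    exact hlast i (c n) (hc n n.lt_succ_self).1
      (hfirst i c (fun k hk => hc k (hk.trans n.lt_succ_self)) h) _ (hc n n.lt_succ_self).2

lemma exists_bump_height {K c δ M M' : ℝ} (hK : 0 ≤ K) (hc : 0 < c) (hδ : 0 < δ) :
    ∃ η > 0, η * M ≤ 1 ∧ (K ≠ 0 → η * M < K * c) ∧ η * M' ≤ δ := by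
  have small : ∀ {t : ℝ} (m : ℝ), 0 < t → ∀ᶠ η in 𝓝[>] (0 : ℝ), η * m < t := fun m ht =>
    nhdsWithin_le_nhds (((continuous_mul_const m).tendsto' 0 0 (zero_mul m)).eventually_lt_const ht)
  have hKc : ∀ᶠ η in 𝓝[>] (0 : ℝ), K ≠ 0 → η * M < K * c := by
    rcases hK.eq_or_lt with rfl | hK
    · exact Eventually.of_forall fun _ h => absurd rfl h
    · exact (small M (mul_pos hK hc)).mono fun _ h _ => h
  obtain ⟨η, hη1, hηK, hηδ, hη0⟩ := ((small M one_pos).and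
    (hKc.and ((small M' hδ).and self_mem_nhdsWithin))).exists
  exact ⟨η, hη0, hη1.le, hηK, hηδ.le⟩

end

variable {E : Type*} [NormedAddCommGroup E] [InnerProductSpace ℝ E]

lemma mul_sin_angle_le_norm_add_smul {c : ℝ} (hc : 0 ≤ c) {n : E} (hn : ‖n‖ = 1) (P : E) :
    c * Real.sin (angle n P) ≤ ‖P + c • n‖ := by
  rcases hc.eq_or_lt with rfl | hc
  · simp
  have h := norm_mul_sin_angle_le (c • n) (-P)
  rwa [InnerProductGeometry.angle_neg_right, Real.sin_pi_sub,
    InnerProductGeometry.angle_smul_left_of_pos _ _ hc, norm_smul, hn, mul_one,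
    Real.norm_of_nonneg hc.le, sub_neg_eq_add, add_comm] at h

lemma exists_segment_chain {x y : E} (hx : ‖x‖ = 2) (hy : ‖y‖ = 2) (hxy : 0 ≤ inner ℝ x y)
    {ρ : ℝ} {n : ℕ} (hn : 0 < n) (hρ : 4 ≤ n * ρ) :
    ∃ c : ℕ → E, c 0 = x ∧ c n = y ∧
      ∀ k < n, (5 / 4 ≤ ‖c k‖ ∧ ‖c k‖ ≤ 2) ∧ ‖c (k + 1) - c k‖ ≤ ρ := by
  have hn' : (0 : ℝ) < n := by exact_mod_cast hn
  refine ⟨fun k => (1 - (k : ℝ) / n) • x + ((k : ℝ) / n) • y, by simp, by simp [hn'.ne'],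
    fun k hk => ?_⟩
  set t : ℝ := (k : ℝ) / n with ht
  have ht0 : 0 ≤ t := by positivity
  have ht1 : 0 ≤ 1 - t := by
    rw [ht, sub_nonneg, div_le_one hn']
    exact_mod_cast hk.le
  refine ⟨⟨?_, ?_⟩, ?_⟩
  · refine (abs_le_of_sq_le_sq' ?_ (norm_nonneg _)).2
    rw [norm_add_sq_real, norm_smul, norm_smul, hx, hy, real_inner_smul_left,
      real_inner_smul_right, Real.norm_of_nonneg ht0, Real.norm_of_nonneg ht1]
    have : 0 ≤ (1 - t) * (t * inner ℝ x y) := by positivity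
    nlinarith [sq_nonneg (2 * t - 1)]
  · refine (norm_add_le _ _).trans ?_
    rw [norm_smul, norm_smul, hx, hy, Real.norm_of_nonneg ht0, Real.norm_of_nonneg ht1]
    linarith
  · have hstep : (1 - ((k + 1 : ℕ) : ℝ) / n) • x + (((k + 1 : ℕ) : ℝ) / n) • y -
        ((1 - t) • x + t • y) = (1 / (n : ℝ)) • (y - x) := by
      rw [Nat.cast_succ, add_div, ← ht]
      module
    rw [hstep, norm_smul, Real.norm_of_nonneg (by positivity), one_div, inv_mul_le_iff₀ hn']
    exact (norm_sub_le _ _).trans (by rw [hx, hy]; linarith)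

variable [FiniteDimensional ℝ E] {p γ Λ τ κ σ ε : ℝ} {w : E → ℝ}

-- The radial profile `κ|y|^{-τ}` is `p`-harmonic, so only the deviation of `P` from its own
-- gradient contributes.
lemma pTrace_fundamental_le (hτ : τ * (p - 1) = finrank ℝ E - p) (hτ0 : 0 ≤ τ) (hκ : 0 ≤ κ)
    {y P : E} (hy : 1 ≤ ‖y‖) (hP : P ≠ 0) :
    pTrace p P (radialHess (normalize y) (κ * -τ * ‖y‖ ^ (-τ - 2))
      (κ * -τ * (-τ - 2) * ‖y‖ ^ (-τ - 2))) ≤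
    (τ + 2) * |p - 2| * ‖P - (κ * -τ * ‖y‖ ^ (-τ - 1)) • normalize y‖ := by
  have hy0 : 0 < ‖y‖ := by linarith
  have hn : ‖normalize y‖ = 1 := norm_normalize (norm_pos_iff.1 hy0)
  set k := κ * τ * ‖y‖ ^ (-τ - 2) with hk
  have hk0 : 0 ≤ k := by positivity
  have hky : κ * τ * ‖y‖ ^ (-τ - 1) = k * ‖y‖ := by
    rw [hk, mul_assoc (κ * τ), ← Real.rpow_add_one hy0.ne']
    ring_nf
  set θ := angle (normalize y) P
  have hsin : 0 ≤ Real.sin θ := InnerProductGeometry.sin_angle_nonneg _ _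
  have hdev : k * Real.sin θ ^ 2 ≤ ‖P - (κ * -τ * ‖y‖ ^ (-τ - 1)) • normalize y‖ :=
    calc k * Real.sin θ ^ 2 ≤ k * Real.sin θ :=
          mul_le_mul_of_nonneg_left (by nlinarith [Real.sin_le_one θ]) hk0
      _ ≤ k * ‖y‖ * Real.sin θ := by gcongr; exact le_mul_of_one_le_right hk0 hy
      _ ≤ ‖P + (k * ‖y‖) • normalize y‖ := mul_sin_angle_le_norm_add_smul (by positivity) hn P
      _ = _ := by rw [← hky, mul_neg, neg_mul, neg_smul, sub_neg_eq_add]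
  calc pTrace p P (radialHess (normalize y) (κ * -τ * ‖y‖ ^ (-τ - 2))
        (κ * -τ * (-τ - 2) * ‖y‖ ^ (-τ - 2)))
      = (τ + 2) * (-(p - 2) * (k * Real.sin θ ^ 2)) := by
        rw [pTrace_radialHess p hn hP, Real.sin_sq, hk]
        linear_combination (κ * τ * ‖y‖ ^ (-τ - 2)) * hτ
    _ ≤ (τ + 2) * (|p - 2| * (k * Real.sin θ ^ 2)) := by gcongr; exact neg_le_abs _
    _ ≤ _ := by rw [mul_assoc (τ + 2)]; gcongr

lemma pTrace_bump_le {α η : ℝ} (hα : 0 ≤ α) (hη : 0 ≤ η) {D P : E} (hD : D ≠ 0) (hP : P ≠ 0) :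
    pTrace p P (radialHess (normalize D) (-η * -α * ‖D‖ ^ (-α - 2))
      (-η * -α * (-α - 2) * ‖D‖ ^ (-α - 2))) ≤
    -(η * α * ‖D‖ ^ (-α - 2) * ((α + 2) * min 1 (p - 1) - (finrank ℝ E + p - 2))) := by
  rw [pTrace_radialHess p (norm_normalize hD) hP]
  set t := Real.cos (angle (normalize D) P) ^ 2
  have ht : t ≤ 1 := Real.cos_sq_le_one _
  have ht0 : 0 ≤ t := sq_nonneg _
  have hmin : min 1 (p - 1) ≤ 1 + (p - 2) * t := by
    rcases le_total 0 (p - 2) with h | h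
    · exact (min_le_left _ _).trans (by nlinarith)
    · exact (min_le_right _ _).trans (by nlinarith)
  have hk : 0 ≤ η * α * ‖D‖ ^ (-α - 2) := by positivity
  nlinarith [mul_le_mul_of_nonneg_left (mul_le_mul_of_nonneg_left hmin
    (by linarith : 0 ≤ α + 2)) hk]

/-- `w` solves the equation on `1 ≤ |x| ≤ 3` and lies there below the fundamental profile
`κ|x|^{-τ} + ε`. The profile is a supersolution because it is constant or `σ ≥ 0`. -/
structure IsBelowProfile (p γ Λ τ κ σ ε : ℝ) (w : E → ℝ) : Prop where
  abs_le : |σ| ≤ Λ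
  eq_zero_or_nonneg : κ * τ = 0 ∨ 0 ≤ σ
  solAt : ∀ y ∈ annulus (0 : E) 1 3, SolAt p γ σ w y
  le : ∀ y ∈ annulus (0 : E) 1 3, w y ≤ κ * ‖y‖ ^ (-τ) + ε

lemma mul_lt_mul_rpow_of_lt {A B α η d : ℝ} (hα : 0 < α) (hη : 0 < η) (hd0 : 0 < d) (hd1 : d ≤ 1)
    (hA : 0 ≤ A) (hAB : A < B) :
    A * (η * (α * d ^ (-α - 1))) < η * α * d ^ (-α - 2) * B :=
  calc A * (η * (α * d ^ (-α - 1))) = η * α * d ^ (-α - 1) * A := by ring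
    _ ≤ η * α * d ^ (-α - 2) * A := by
      have := Real.rpow_le_rpow_of_exponent_ge hd0 hd1 (by linarith : -α - 2 ≤ -α - 1)
      gcongr
    _ < η * α * d ^ (-α - 2) * B := mul_lt_mul_of_pos_left hAB (by positivity)

lemma bumpBarrier_strict_supersolution {α η ρ : ℝ} {x z : E}
    (hτ : τ * (p - 1) = finrank ℝ E - p) (hτ0 : 0 ≤ τ) (hκ : 0 ≤ κ) (hγ : 1 ≤ γ)
    (hα : 0 < α) (hαΛ : (τ + 2) * |p - 2| + Λ < (α + 2) * min 1 (p - 1) - (finrank ℝ E + p - 2))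
    (hη : 0 < η) (hσ : |σ| ≤ Λ) (hsign : κ * τ = 0 ∨ 0 ≤ σ) (hx : 1 ≤ ‖x‖) (hxz : x ≠ z)
    (hxz1 : ‖x - z‖ ≤ 1) (hR1 : η * (α * ‖x - z‖ ^ (-α - 1)) ≤ 1)
    (hRQ : κ * τ ≠ 0 → η * (α * ‖x - z‖ ^ (-α - 1)) < κ * τ * ‖x‖ ^ (-τ - 1)) :
    ∃ P B, HasLineJet (bumpBarrier τ κ ε α η ρ z) x P B ∧ P ≠ 0 ∧
      pTrace p P B < σ * ‖P‖ ^ γ := by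
  have hx0 : x ≠ 0 := norm_pos_iff.1 (by linarith)
  have hD : x - z ≠ 0 := sub_ne_zero.2 hxz
  set d := ‖x - z‖
  have hd0 : 0 < d := norm_pos_iff.2 hD
  have hjet := ((hasLineJet_rpow κ (-τ) hx0).add (hasLineJet_const ε x)).add
    ((hasLineJet_rpow (-η) (-α) hxz).add (hasLineJet_const (η * (3 * ρ) ^ (-α)) x))
  simp only [sub_zero, add_zero] at hjet
  set Q := (κ * -τ * ‖x‖ ^ (-τ - 1)) • normalize x with hQ
  set R := (-η * -α * d ^ (-α - 1)) • normalize (x - z) with hR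
  have hRnorm : ‖R‖ = η * (α * d ^ (-α - 1)) := by
    rw [hR, norm_smul, norm_normalize hD, mul_one, neg_mul_neg, mul_assoc,
      Real.norm_of_nonneg (by positivity)]
  have hR0 : 0 < ‖R‖ := by rw [hRnorm]; positivity
  have hQnorm : ‖Q‖ = κ * τ * ‖x‖ ^ (-τ - 1) := by
    rw [hQ, norm_smul, norm_normalize hx0, mul_one, mul_neg, neg_mul, norm_neg,
      Real.norm_of_nonneg (by positivity)]
  have hQ0 : κ * τ = 0 → Q = 0 := fun h => by rw [← norm_eq_zero, hQnorm, h, zero_mul]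
  have hP : Q + R ≠ 0 := fun h => by
    rcases eq_or_ne (κ * τ) 0 with h0 | h0
    · rw [hQ0 h0, zero_add] at h
      exact hR0.ne' (norm_eq_zero.2 h)
    · have : ‖Q‖ = ‖R‖ := by rw [eq_neg_of_add_eq_zero_left h, norm_neg]
      linarith [hRQ h0]
  refine ⟨Q + R, _, hjet, hP, ?_⟩
  have hfund := pTrace_fundamental_le hτ hτ0 hκ hx hP
  rw [← hQ, add_sub_cancel_left] at hfund
  have hbump := pTrace_bump_le (p := p) hα.le hη.le hD hP
  have hrhs := neg_mul_norm_le_mul_norm_add_rpow hγ hσ (hsign.imp_left hQ0) (hRnorm.trans_le hR1)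
  have hdom := mul_lt_mul_rpow_of_lt hα hη hd0 hxz1
    (add_nonneg (by positivity) ((abs_nonneg σ).trans hσ)) hαΛ
  rw [← hRnorm] at hdom
  rw [pTrace_add]
  linarith

lemma IsBelowProfile.le_bumpBarrier {α η ρ δ : ℝ} {z : E} (h : IsBelowProfile p γ Λ τ κ σ ε w)
    (hp : 1 < p) (hγ : 1 ≤ γ) (hτ : τ * (p - 1) = finrank ℝ E - p) (hτ0 : 0 ≤ τ) (hκ : 0 ≤ κ)
    (hα : 0 < α) (hαΛ : (τ + 2) * |p - 2| + Λ < (α + 2) * min 1 (p - 1) - (finrank ℝ E + p - 2))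
    (hρ : 0 < ρ) (hρ' : 3 * ρ ≤ 1 / 4) (hz : 5 / 4 ≤ ‖z‖) (hz' : ‖z‖ ≤ 2) (hη : 0 < η)
    (hη1 : η * (α * ρ ^ (-α - 1)) ≤ 1)
    (hηκ : κ * τ ≠ 0 → η * (α * ρ ^ (-α - 1)) < κ * τ * 3 ^ (-τ - 1)) (hηδ : η * ρ ^ (-α) ≤ δ)
    (hgap : HasGapOn τ κ ε δ w (closedBall z ρ)) :
    ∀ y ∈ annulus z ρ (3 * ρ), w y ≤ bumpBarrier τ κ ε α η ρ z y := by
  have hsub : ∀ y, ‖y - z‖ ≤ 3 * ρ → y ∈ annulus (0 : E) 1 3 := fun y hy =>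
    mem_annulus_one_three (by linarith) (by linarith) hy
  have hnorm : ∀ y, ‖y - z‖ ≤ 3 * ρ → 1 ≤ ‖y‖ ∧ ‖y‖ ≤ 3 := fun y hy => by
    simpa [annulus] using hsub y hy
  have hne : ∀ y, ρ ≤ ‖y - z‖ → y ≠ z := by
    rintro y hy rfl
    rw [sub_self, norm_zero] at hy
    linarith
  refine le_of_strict_supersolution_annulus hp.le (fun y hy => h.solAt y (hsub y hy.2))
    (fun y hy => (continuousAt_bumpBarrier (norm_pos_iff.1 (by linarith [(hnorm y hy.2).1]))
      (hne y hy.1)).continuousWithinAt) (fun y hy hy' => ?_) (fun y hy => ?_) (fun y hy => ?_)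
  · have hpow : η * (α * ‖y - z‖ ^ (-α - 1)) ≤ η * (α * ρ ^ (-α - 1)) := by
      have := Real.rpow_le_rpow_of_nonpos hρ hy.le (by linarith : -α - 1 ≤ 0)
      gcongr
    refine bumpBarrier_strict_supersolution hτ hτ0 hκ hγ hα hαΛ hη h.abs_le h.eq_zero_or_nonneg
      (hnorm y hy'.le).1 (hne y hy.le) (by linarith) (hpow.trans hη1) fun hκτ => ?_
    have := Real.rpow_le_rpow_of_nonpos (by linarith [(hnorm y hy'.le).1]) (hnorm y hy'.le).2
      (by linarith : -τ - 1 ≤ 0)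
    exact (hpow.trans_lt (hηκ hκτ)).trans_le (by gcongr)
  · have := hgap y (by rw [mem_closedBall, dist_eq_norm, hy])
    have : 0 < η * (3 * ρ) ^ (-α) := by positivity
    rw [bumpBarrier, hy]
    linarith
  · rw [bumpBarrier, hy, neg_mul, neg_add_cancel, add_zero]
    exact h.le y (hsub y hy.le)

lemma exists_gap_closedBall_two_mul {ρ δ : ℝ} (hp : 1 < p) (hγ : 1 ≤ γ) (hΛ : 0 ≤ Λ)
    (hτ : τ * (p - 1) = finrank ℝ E - p) (hτ0 : 0 ≤ τ) (hκ : 0 ≤ κ) (hρ : 0 < ρ)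
    (hρ' : 3 * ρ ≤ 1 / 4) (hδ : 0 < δ) :
    ∃ δ' > 0, ∀ (w : E → ℝ) (σ ε : ℝ) (z : E), IsBelowProfile p γ Λ τ κ σ ε w →
      5 / 4 ≤ ‖z‖ → ‖z‖ ≤ 2 → HasGapOn τ κ ε δ w (closedBall z ρ) →
      HasGapOn τ κ ε δ' w (closedBall z (2 * ρ)) := by
  have hmin : 0 < min 1 (p - 1) := lt_min one_pos (by linarith)
  obtain ⟨α, hα, hαΛ⟩ : ∃ α > 0,
      (τ + 2) * |p - 2| + Λ < (α + 2) * min 1 (p - 1) - (finrank ℝ E + p - 2) := by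
    refine ⟨((τ + 2) * |p - 2| + Λ + finrank ℝ E + p) / min 1 (p - 1), by positivity, ?_⟩
    rw [add_mul (_ / _), div_mul_cancel₀ _ hmin.ne']
    linarith
  obtain ⟨η, hη, hη1, hηκ, hηδ⟩ := exists_bump_height (M := α * ρ ^ (-α - 1)) (M' := ρ ^ (-α))
    (mul_nonneg hκ hτ0) (by positivity : (0 : ℝ) < 3 ^ (-τ - 1)) hδ
  have hdrop : 0 < η * ((2 * ρ) ^ (-α) - (3 * ρ) ^ (-α)) :=
    mul_pos hη (sub_pos.2 (Real.rpow_lt_rpow_of_neg (by linarith) (by linarith) (by linarith)))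
  refine ⟨min δ _, lt_min hδ hdrop, fun w σ ε z h hz hz' hgap y hy => ?_⟩
  rw [mem_closedBall, dist_eq_norm] at hy
  rcases le_or_gt ‖y - z‖ ρ with hyρ | hyρ
  · have := hgap y (by rwa [mem_closedBall, dist_eq_norm])
    linarith [min_le_left δ (η * ((2 * ρ) ^ (-α) - (3 * ρ) ^ (-α)))]
  · have hbar := h.le_bumpBarrier hp hγ hτ hτ0 hκ hα hαΛ hρ hρ' hz hz' hη hη1 hηκ hηδ hgap y
      ⟨hyρ.le, by linarith⟩
    have hpow : η * (2 * ρ) ^ (-α) ≤ η * ‖y - z‖ ^ (-α) := by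
      have := Real.rpow_le_rpow_of_nonpos (hρ.trans hyρ) hy (by linarith : -α ≤ 0)
      gcongr
    rw [bumpBarrier] at hbar
    linarith [min_le_right δ (η * ((2 * ρ) ^ (-α) - (3 * ρ) ^ (-α)))]

lemma exists_orthogonal_sphere (hN : 2 ≤ finrank ℝ E) (x y : E) :
    ∃ z : E, ‖z‖ = 2 ∧ inner ℝ x z = 0 ∧ 0 ≤ inner ℝ z y := by
  obtain ⟨z, hz, hz0⟩ : ∃ z ∈ (ℝ ∙ x)ᗮ, z ≠ 0 := by
    refine Submodule.exists_mem_ne_zero_of_ne_bot fun h => ?_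
    have hdim := (ℝ ∙ x).finrank_add_finrank_orthogonal
    rw [h, finrank_bot] at hdim
    have := finrank_span_le_card (R := ℝ) ({x} : Set E)
    rw [Set.toFinset_singleton, Finset.card_singleton] at this
    omega
  rw [Submodule.mem_orthogonal_singleton_iff_inner_right] at hz
  have hnorm : ‖(2 : ℝ) • normalize z‖ = 2 := by rw [norm_smul, norm_normalize hz0]; norm_num
  have horth : inner ℝ x ((2 : ℝ) • normalize z) = 0 := by
    rw [NormedSpace.normalize, real_inner_smul_right, real_inner_smul_right, hz, mul_zero, mul_zero]
  rcases le_total 0 (inner ℝ ((2 : ℝ) • normalize z) y) with h | h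
  · exact ⟨_, hnorm, horth, h⟩
  · exact ⟨-((2 : ℝ) • normalize z), by rwa [norm_neg], by rw [inner_neg_right, horth, neg_zero],
      by rwa [inner_neg_left, neg_nonneg]⟩

lemma exists_radius_profile_sub_le (τ κ L : ℝ) {δ : ℝ} (hδ : 0 < δ) :
    ∃ ρ > 0, ρ ≤ 1 / 12 ∧ L * ρ ^ (1 / 2 : ℝ) ≤ δ / 4 ∧
      ∀ t : ℝ, |t - 2| ≤ ρ → κ * 2 ^ (-τ) - κ * t ^ (-τ) ≤ δ / 4 := by
  have hL : ∀ᶠ ρ in 𝓝[>] (0 : ℝ), L * ρ ^ (1 / 2 : ℝ) ≤ δ / 4 := by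
    have : ContinuousAt (fun ρ : ℝ => L * ρ ^ (1 / 2 : ℝ)) 0 :=
      continuousAt_const.mul (Real.continuousAt_rpow_const _ _ (Or.inr (by norm_num)))
    refine nhdsWithin_le_nhds (this.eventually_le_const ?_)
    simpa using hδ
  have hprofile : ∀ᶠ t in 𝓝 (2 : ℝ), κ * 2 ^ (-τ) - κ * t ^ (-τ) ≤ δ / 4 := by
    have : ContinuousAt (fun t : ℝ => κ * 2 ^ (-τ) - κ * t ^ (-τ)) 2 :=
      continuousAt_const.sub (continuousAt_const.mul
        (Real.continuousAt_rpow_const 2 _ (Or.inl two_ne_zero)))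
    exact this.eventually_le_const (by simpa using hδ)
  obtain ⟨r, hr0, hr⟩ := Metric.eventually_nhds_iff.1 hprofile
  have hsmall : ∀ᶠ ρ in 𝓝[>] (0 : ℝ), ρ < min (1 / 12) r :=
    nhdsWithin_le_nhds (eventually_lt_nhds (lt_min (by norm_num) hr0))
  obtain ⟨ρ, hρL, hρr, hρ⟩ := (hL.and (hsmall.and self_mem_nhdsWithin)).exists
  exact ⟨ρ, hρ, (hρr.trans_le (min_le_left _ _)).le, hρL, fun t ht =>
    hr (ht.trans_lt (hρr.trans_le (min_le_right _ _)))⟩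

lemma exists_gap_closedBall_of_gap_point (hp : 1 < p) (hγ : 0 ≤ γ) (hγ2 : γ < 2) (Λ κ : ℝ)
    {δ : ℝ} (hδ : 0 < δ) :
    ∃ ρ > 0, ρ ≤ 1 / 12 ∧ ∀ (w : E → ℝ) (σ ε : ℝ), IsBelowProfile p γ Λ τ κ σ ε w →
      (∀ y ∈ annulus (0 : E) 1 3, ∀ y' ∈ annulus (0 : E) 1 3, w y - w y' ≤ 1) →
      ∀ x : E, ‖x‖ = 2 → w x ≤ κ * 2 ^ (-τ) + ε - δ →
        HasGapOn τ κ ε (δ / 2) w (closedBall x ρ) := by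
  obtain ⟨L, hL, hholder⟩ := exists_holder_estimate E hp hγ hγ2 Λ
  obtain ⟨ρ, hρ0, hρ12, hρL, hρκ⟩ := exists_radius_profile_sub_le τ κ L hδ
  refine ⟨ρ, hρ0, hρ12, fun w σ ε h hosc x hx hwx y hy => ?_⟩
  have hball : ∀ y ∈ closedBall x 1, y ∈ annulus (0 : E) 1 3 := fun y hy =>
    mem_annulus_one_three (by linarith) (by linarith) (mem_closedBall_iff_norm.1 hy)
  have hnear : -w x - -w y ≤ L * ‖x - y‖ ^ (1 / 2 : ℝ) :=
    hholder (fun y => -w y) (-σ) x (by rw [abs_neg]; exact h.abs_le)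
      (fun y hy => (h.solAt y (hball y hy)).neg)
      (fun y hy y' hy' => by linarith [hosc y' (hball y' hy') y (hball y hy)]) y
      (closedBall_subset_closedBall (by linarith) hy)
  rw [mem_closedBall_iff_norm] at hy
  have hpow : L * ‖x - y‖ ^ (1 / 2 : ℝ) ≤ L * ρ ^ (1 / 2 : ℝ) := by
    rw [norm_sub_rev]
    gcongr
  have := hρκ ‖y‖ (by rw [← hx]; exact (abs_norm_sub_norm_le y x).trans hy)
  linarith

-- Hopf's lemma and a chain of balls; a third point orthogonal to `x` keeps the chain from `x`
-- to `y` away from the origin.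
theorem exists_gap_sphere_of_gap_point (hN : 2 ≤ finrank ℝ E) (hp : 1 < p) (hγ : 1 ≤ γ)
    (hγ2 : γ < 2) (hΛ : 0 ≤ Λ) (hτ : τ * (p - 1) = finrank ℝ E - p) (hτ0 : 0 ≤ τ) (hκ : 0 ≤ κ)
    {δ : ℝ} (hδ : 0 < δ) :
    ∃ δ' > 0, ∀ (w : E → ℝ) (σ ε : ℝ), IsBelowProfile p γ Λ τ κ σ ε w →
      (∀ y ∈ annulus (0 : E) 1 3, ∀ y' ∈ annulus (0 : E) 1 3, w y - w y' ≤ 1) →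
      (∃ x : E, ‖x‖ = 2 ∧ w x ≤ κ * 2 ^ (-τ) + ε - δ) →
      ∀ y : E, ‖y‖ = 2 → w y ≤ κ * 2 ^ (-τ) + ε - δ' := by
  obtain ⟨ρ, hρ0, hρ12, hinit⟩ :=
    exists_gap_closedBall_of_gap_point (E := E) (τ := τ) hp (by linarith) hγ2 Λ κ hδ
  set n := ⌈4 / ρ⌉₊
  have hn0 : 0 < n := Nat.ceil_pos.2 (by positivity)
  have hnρ : 4 ≤ n * ρ := (div_le_iff₀ hρ0).1 (Nat.le_ceil _)
  let ι := {i : (E → ℝ) × ℝ × ℝ // IsBelowProfile p γ Λ τ κ i.2.1 i.2.2 i.1}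
  let G : ι → ℝ → E → Prop := fun i δ z => HasGapOn τ κ i.1.2.2 δ i.1.1 (closedBall z ρ)
  have hchain := exists_chain G (fun z => 5 / 4 ≤ ‖z‖ ∧ ‖z‖ ≤ 2) (ρ := ρ) (fun δ hδ => by
    obtain ⟨δ', hδ', h⟩ :=
      exists_gap_closedBall_two_mul (E := E) hp hγ hΛ hτ hτ0 hκ hρ0 (by linarith) hδ
    refine ⟨δ', hδ', fun i z hz hG z' hz' y hy => h _ _ _ z i.2 hz.1 hz.2 hG y ?_⟩
    rw [← dist_eq_norm] at hz'
    rw [mem_closedBall] at hy ⊢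
    linarith [dist_triangle y z' z]) n
  obtain ⟨δ₁, hδ₁, hfirst⟩ := hchain (δ / 2) (by positivity)
  obtain ⟨δ₂, hδ₂, hsecond⟩ := hchain δ₁ hδ₁
  refine ⟨δ₂, hδ₂, ?_⟩
  rintro w σ ε h hosc ⟨x, hx, hwx⟩ y hy
  obtain ⟨z, hz, hxz, hzy⟩ := exists_orthogonal_sphere hN x y
  obtain ⟨c, rfl, rfl, hc⟩ := exists_segment_chain hx hz hxz.ge hn0 hnρ
  obtain ⟨c', hc0, rfl, hc'⟩ := exists_segment_chain hz hy hzy hn0 hnρ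
  let i : ι := ⟨(w, σ, ε), h⟩
  have hend := hsecond i c' hc' (hc0 ▸ hfirst i c hc (hinit w σ ε h hosc _ hx hwx)) _
    (mem_closedBall_self hρ0.le)
  rwa [hy] at hend

end Gap

/-! ### Radial profiles -/

/-- Relations between the parameters in the subcritical range: `m = q + 1 - p`,
`τ = (N - p) / (p - 1)` is the decay exponent of the fundamental solution and `β = β_q`. In these
terms the constant `b` of the theorem is `(p - 1) * (β - τ)`. -/
structure Subcritical (N p m τ β : ℝ) : Prop where
  one_lt : 1 < p
  dim : τ * (p - 1) = N - p
  tau_nonneg : 0 ≤ τ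
  tau_lt : τ < β
  beta_mul : (β + 1) * m = 1

namespace Subcritical
variable {N p m τ β : ℝ}

lemma beta_pos (h : Subcritical N p m τ β) : 0 < β := h.tau_nonneg.trans_lt h.tau_lt

lemma m_pos (h : Subcritical N p m τ β) : 0 < m :=
  pos_of_mul_pos_right (h.beta_mul ▸ one_pos) (by linarith [h.beta_pos])

lemma m_lt_one (h : Subcritical N p m τ β) : m < 1 := by
  nlinarith [h.beta_mul, h.beta_pos, h.m_pos]

lemma tau_add_one_mul_lt_one (h : Subcritical N p m τ β) : (τ + 1) * m < 1 := by
  nlinarith [h.beta_mul, h.tau_lt, h.m_pos]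

lemma b_pos (h : Subcritical N p m τ β) : 0 < (p - 1) * (β - τ) :=
  mul_pos (sub_pos.2 h.one_lt) (sub_pos.2 h.tau_lt)

end Subcritical

section RadialFund
variable {τ r t : ℝ}

/-- The fundamental solution as a function of `|x|`, for `τ = (N - p) / (p - 1)`. -/
noncomputable def radialFund (τ t : ℝ) : ℝ :=
  if 0 < τ then t ^ (-τ) / τ else -Real.log t

lemma radialFund_of_pos (hτ : 0 < τ) : radialFund τ = fun t => t ^ (-τ) / τ := by
  ext t
  rw [radialFund, if_pos hτ]

lemma radialFund_zero : radialFund 0 = fun t => -Real.log t := by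
  ext t
  rw [radialFund, if_neg (lt_irrefl 0)]

lemma hasDerivAt_radialFund (hτ : 0 ≤ τ) (ht : 0 < t) :
    HasDerivAt (radialFund τ) (-t ^ (-τ - 1)) t := by
  rcases hτ.eq_or_lt with rfl | hτ
  · rw [radialFund_zero, neg_zero, zero_sub, Real.rpow_neg_one]
    exact (Real.hasDerivAt_log ht.ne').neg
  · rw [radialFund_of_pos hτ]
    refine ((Real.hasDerivAt_rpow_const (Or.inl ht.ne')).div_const _).congr_deriv ?_
    field_simp

lemma radialFund_nonneg (hτ : 0 ≤ τ) (ht : 0 < t) (ht1 : t ≤ 1) : 0 ≤ radialFund τ t := by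
  rcases hτ.eq_or_lt with rfl | hτ
  · rw [radialFund_zero]
    exact neg_nonneg.2 (Real.log_nonpos ht.le ht1)
  · rw [radialFund_of_pos hτ]
    positivity

lemma tendsto_radialFund_atTop (hτ : 0 ≤ τ) : Tendsto (radialFund τ) (𝓝[>] 0) atTop := by
  rcases hτ.eq_or_lt with rfl | hτ
  · rw [radialFund_zero]
    exact tendsto_neg_atBot_atTop.comp Real.tendsto_log_nhdsGT_zero
  · rw [radialFund_of_pos hτ]
    exact (tendsto_rpow_neg_nhdsGT_zero (neg_lt_zero.2 hτ)).atTop_div_const hτ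

lemma antitoneOn_radialFund (hτ : 0 ≤ τ) : AntitoneOn (radialFund τ) (Ioi 0) := by
  intro r hr t _ hrt
  rcases hτ.eq_or_lt with rfl | hτ
  · rw [radialFund_zero]
    exact neg_le_neg (Real.log_le_log hr hrt)
  · rw [radialFund_of_pos hτ]
    exact div_le_div_of_nonneg_right (Real.rpow_le_rpow_of_nonpos hr hrt (by linarith)) hτ.le

lemma radialFund_mul_le (hτ : 0 ≤ τ) (hr : 0 < r) (ht : 1 ≤ t) :
    radialFund τ (r * t) ≤ radialFund τ r * t ^ (-τ) := by
  have ht0 : 0 < t := by linarith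
  rcases hτ.eq_or_lt with rfl | hτ
  · simp only [radialFund_zero, neg_zero, Real.rpow_zero, mul_one]
    exact neg_le_neg (Real.log_le_log hr (le_mul_of_one_le_right hr.le ht))
  · simp only [radialFund_of_pos hτ]
    rw [Real.mul_rpow hr.le ht0.le, div_mul_eq_mul_div]

lemma radialFund_mul_two_rpow_le (hτ : 0 ≤ τ) (hr : 0 < r) :
    radialFund τ r * 2 ^ (-τ) ≤ radialFund τ (r * 2) + Real.log 2 := by
  rcases hτ.eq_or_lt with rfl | hτ
  · simp only [radialFund_zero, neg_zero, Real.rpow_zero, mul_one]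
    rw [Real.log_mul hr.ne' two_ne_zero]
    linarith
  · simp only [radialFund_of_pos hτ]
    rw [Real.mul_rpow hr.le zero_le_two, div_mul_eq_mul_div]
    exact le_add_of_nonneg_right (Real.log_nonneg one_le_two)

lemma tendsto_rpow_nhdsGT_zero {β : ℝ} (hβ : 0 < β) :
    Tendsto (fun t : ℝ => t ^ β) (𝓝[>] 0) (𝓝 0) := by
  have := (Real.continuousAt_rpow_const 0 β (Or.inr hβ.le)).tendsto
  rw [Real.zero_rpow hβ.ne'] at this
  exact this.mono_left nhdsWithin_le_nhds

lemma tendsto_rpow_mul_radialFund {β : ℝ} (hτ : 0 ≤ τ) (hβ : τ < β) :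
    Tendsto (fun t => t ^ β * radialFund τ t) (𝓝[>] 0) (𝓝 0) := by
  rcases hτ.eq_or_lt with rfl | hτ
  · simpa [radialFund_zero, mul_comm] using (tendsto_log_mul_rpow_nhdsGT_zero hβ).neg
  · have hlim := (tendsto_rpow_nhdsGT_zero (sub_pos.2 hβ)).div_const τ
    rw [zero_div] at hlim
    refine hlim.congr' (eventually_nhdsWithin_of_forall fun t ht => ?_)
    simp only [radialFund_of_pos hτ]
    rw [mul_div_assoc', ← Real.rpow_add ht, sub_eq_add_neg]

end RadialFund

section Barrier
variable {m τ β b C a R t : ℝ}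

/-- The power `g ^ (-m)` of the slope `g` of a radial barrier. In terms of it the radial equation is
linear, and for `b = (p - 1) * (β - τ)` this is its general solution. -/
noncomputable def invSlope (m τ C b t : ℝ) : ℝ := C * t ^ ((τ + 1) * m) + t / b

/-- The slope of a radial barrier; `β + 1` stands for `1 / m`. -/
noncomputable def barrierSlope (m τ β C b t : ℝ) : ℝ := invSlope m τ C b t ^ (-(β + 1))

/-- The increasing radial barrier vanishing at `R`. -/
noncomputable def barrier (m τ β C b R t : ℝ) : ℝ := ∫ s in R..t, barrierSlope m τ β C b s

lemma hasDerivAt_invSlope (ht : 0 < t) :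
    HasDerivAt (invSlope m τ C b)
      ((τ + 1) * m * (invSlope m τ C b t / t) + (1 - (τ + 1) * m) / b) t := by
  refine ((hasDerivAt_const_mul_rpow C _ ht).add ((hasDerivAt_id t).div_const b)).congr_deriv ?_
  rw [invSlope, Real.rpow_sub_one ht.ne']
  field_simp
  ring

lemma hasDerivAt_barrierSlope (hβ : (β + 1) * m = 1) (ht : 0 < t) (hD : 0 < invSlope m τ C b t) :
    HasDerivAt (barrierSlope m τ β C b)
      (-((τ + 1) * (barrierSlope m τ β C b t / t)
        + (β - τ) / b * barrierSlope m τ β C b t ^ (m + 1))) t := by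
  refine ((hasDerivAt_invSlope ht).rpow_const (Or.inl hD.ne')).congr_deriv ?_
  have hpow : barrierSlope m τ β C b t ^ (m + 1) =
      barrierSlope m τ β C b t / invSlope m τ C b t := by
    rw [barrierSlope, ← Real.rpow_mul hD.le, ← Real.rpow_sub_one hD.ne']
    congr 1
    linear_combination -hβ
  have hcoeff : ((τ + 1) * m * (invSlope m τ C b t / t) + (1 - (τ + 1) * m) / b) * (β + 1) =
      (τ + 1) * (invSlope m τ C b t / t) + (β - τ) / b := by
    linear_combination ((τ + 1) * (invSlope m τ C b t / t) - (τ + 1) / b) * hβ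
  rw [mul_neg, hcoeff, hpow, Real.rpow_sub_one hD.ne', ← barrierSlope]
  field_simp

lemma hasDerivAt_barrier (hβ : (β + 1) * m = 1) (ha : 0 ≤ a)
    (hD : ∀ s, a < s → 0 < invSlope m τ C b s) (hR : a < R) (ht : a < t) :
    HasDerivAt (barrier m τ β C b R) (barrierSlope m τ β C b t) t := by
  have hcont : ∀ s ∈ Ioi a, ContinuousAt (barrierSlope m τ β C b) s := fun s hs =>
    (hasDerivAt_barrierSlope hβ (ha.trans_lt hs) (hD s hs)).continuousAt
  have hcontOn := continuousOn_of_forall_continuousAt hcont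
  have hsub : uIcc R t ⊆ Ioi a := fun s hs => (lt_min hR ht).trans_le hs.1
  exact intervalIntegral.integral_hasDerivAt_right (hcontOn.mono hsub).intervalIntegrable
    (hcontOn.stronglyMeasurableAtFilter isOpen_Ioi t ht) (hcont t ht)

lemma barrier_self : barrier m τ β C b R R = 0 := intervalIntegral.integral_same

lemma sub_le_sub_of_hasDerivAt_le {F G F' G' : ℝ → ℝ} (htR : t ≤ R)
    (hF : ∀ s ∈ Icc t R, HasDerivAt F (F' s) s) (hG : ∀ s ∈ Icc t R, HasDerivAt G (G' s) s)
    (hle : ∀ s ∈ Icc t R, F' s ≤ G' s) : F R - F t ≤ G R - G t := by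
  have hmono : MonotoneOn (fun s => G s - F s) (Icc t R) := by
    have hderiv := fun s hs => (hG s hs).sub (hF s hs)
    refine monotoneOn_of_hasDerivWithinAt_nonneg (convex_Icc t R)
      (fun s hs => (hderiv s hs).continuousAt.continuousWithinAt)
      (fun s hs => (hderiv s (interior_subset hs)).hasDerivWithinAt)
      fun s hs => sub_nonneg.2 (hle s (interior_subset hs))
  have := hmono (left_mem_Icc.2 htR) (right_mem_Icc.2 htR) htR
  linarith

lemma hasDerivAt_neg_mul_rpow_neg (hβ : β ≠ 0) (hb : 0 < b) {s : ℝ} (hs : a < s) :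
    HasDerivAt (fun s => -(b ^ (β + 1) / β * (s - a) ^ (-β))) (((s - a) / b) ^ (-(β + 1))) s := by
  have hsa : 0 < s - a := sub_pos.2 hs
  have hderiv := (hasDerivAt_const_mul_rpow (b ^ (β + 1) / β) (-β) hsa).neg
  refine (HasDerivAt.comp_sub_const s a hderiv).congr_deriv ?_
  rw [Real.div_rpow hsa.le hb.le, Real.rpow_neg hb.le, div_inv_eq_mul, neg_add']
  field_simp

lemma rpow_le_neg_barrier (hβ : (β + 1) * m = 1) (hβ0 : 0 < β) (ha : 0 ≤ a)
    (hD : ∀ s, a < s → 0 < invSlope m τ C b s) {b' c : ℝ} (hb' : 0 < b') (hct : c < t)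
    (hat : a < t) (htR : t ≤ R) (hle : ∀ s, t ≤ s → invSlope m τ C b s ≤ (s - c) / b') :
    b' ^ (β + 1) / β * ((t - c) ^ (-β) - (R - c) ^ (-β)) ≤ -barrier m τ β C b R t := by
  have hcomp := sub_le_sub_of_hasDerivAt_le htR
    (fun s hs => hasDerivAt_neg_mul_rpow_neg hβ0.ne' hb' (hct.trans_le hs.1))
    (fun s hs => hasDerivAt_barrier (R := R) hβ ha hD (hat.trans_le htR) (hat.trans_le hs.1))
    fun s hs => Real.rpow_le_rpow_of_nonpos (hD s (hat.trans_le hs.1)) (hle s hs.1) (by linarith)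
  rw [barrier_self] at hcomp
  linarith

lemma neg_barrier_le_rpow (hβ : (β + 1) * m = 1) (hβ0 : 0 < β) (ha : 0 ≤ a)
    (hD : ∀ s, a < s → 0 < invSlope m τ C b s) {b' : ℝ} (hb' : 0 < b') (hat : a < t) (htR : t ≤ R)
    (hle : ∀ s, t ≤ s → s / b' ≤ invSlope m τ C b s) :
    -barrier m τ β C b R t ≤ b' ^ (β + 1) / β * t ^ (-β) := by
  have ht : 0 < t := ha.trans_lt hat
  have hcomp := sub_le_sub_of_hasDerivAt_le htR
    (fun s hs => hasDerivAt_barrier (R := R) hβ ha hD (hat.trans_le htR) (hat.trans_le hs.1))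
    (fun s hs => hasDerivAt_neg_mul_rpow_neg (a := 0) hβ0.ne' hb' (ht.trans_le hs.1))
    fun s hs => by
      rw [sub_zero]
      exact Real.rpow_le_rpow_of_nonpos (div_pos (ht.trans_le hs.1) hb') (hle s hs.1) (by linarith)
  have hR : 0 < b' ^ (β + 1) / β * R ^ (-β) := by
    have := ht.trans_le htR
    positivity
  rw [barrier_self, sub_zero, sub_zero] at hcomp
  linarith

lemma neg_barrier_le_radialFund (hβ : (β + 1) * m = 1) (hβ0 : 0 ≤ β) (hτ : 0 ≤ τ) (hb : 0 < b)
    (hC : 0 < C) (hD : ∀ s, 0 < s → 0 < invSlope m τ C b s) (ht : 0 < t) (htR : t ≤ R)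
    (hR1 : R ≤ 1) : -barrier m τ β C b R t ≤ C ^ (-(β + 1)) * radialFund τ t := by
  have hR : 0 < R := ht.trans_le htR
  have hcomp := sub_le_sub_of_hasDerivAt_le htR
    (fun s hs => hasDerivAt_barrier (R := R) hβ le_rfl hD hR (ht.trans_le hs.1))
    (fun s hs => (hasDerivAt_radialFund hτ (ht.trans_le hs.1)).const_mul (-C ^ (-(β + 1))))
    fun s hs => by
      have hs0 : 0 < s := ht.trans_le hs.1
      calc invSlope m τ C b s ^ (-(β + 1)) ≤ (C * s ^ ((τ + 1) * m)) ^ (-(β + 1)) :=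
            Real.rpow_le_rpow_of_nonpos (by positivity)
              (le_add_of_nonneg_right (by positivity)) (by linarith)
        _ = -C ^ (-(β + 1)) * -s ^ (-τ - 1) := by
            rw [Real.mul_rpow hC.le (by positivity), ← Real.rpow_mul hs0.le,
              show (τ + 1) * m * -(β + 1) = -τ - 1 by linear_combination -(τ + 1) * hβ]
            ring
  have hfund := mul_nonneg (Real.rpow_nonneg hC.le (-(β + 1))) (radialFund_nonneg hτ hR hR1)
  rw [barrier_self] at hcomp
  linarith

lemma invSlope_pos (hC : 0 ≤ C) (hb : 0 < b) (ht : 0 < t) : 0 < invSlope m τ C b t := by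
  rw [invSlope]
  positivity

lemma invSlope_neg_mul (c x : ℝ) (ht : 0 < t) :
    invSlope m τ (-(c * x ^ (1 - (τ + 1) * m))) b t = (1 / b - c) * t
      + c * (t ^ ((τ + 1) * m) * (t ^ (1 - (τ + 1) * m) - x ^ (1 - (τ + 1) * m))) := by
  have hmul : t ^ ((τ + 1) * m) * t ^ (1 - (τ + 1) * m) = t := by
    rw [← Real.rpow_add ht, add_sub_cancel, Real.rpow_one]
  rw [invSlope]
  linear_combination -c * hmul

lemma exists_invSlope_le {b' x : ℝ} (hθ : (τ + 1) * m < 1) (hb' : 0 < b') (hb : b' < b)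
    (hx : 0 < x) : ∃ C > 0, ∀ s, x ≤ s → invSlope m τ C b s ≤ s / b' := by
  have hc : 0 < 1 / b' - 1 / b := sub_pos.2 (one_div_lt_one_div_of_lt hb' hb)
  refine ⟨-((1 / b - 1 / b') * x ^ (1 - (τ + 1) * m)), ?_, fun s hs => ?_⟩
  · rw [← neg_mul, neg_sub]
    positivity
  · have hs0 : 0 < s := hx.trans_le hs
    have hpow := sub_nonneg.2 (Real.rpow_le_rpow hx.le hs (sub_nonneg.2 hθ.le))
    have hneg := mul_nonneg hc.le (mul_nonneg (Real.rpow_nonneg hs0.le ((τ + 1) * m)) hpow)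
    rw [invSlope_neg_mul _ _ hs0, sub_sub_cancel, one_div_mul_eq_div]
    linarith

lemma exists_le_invSlope {b' x : ℝ} (hθ0 : 0 ≤ (τ + 1) * m) (hθ : (τ + 1) * m < 1) (hb : 0 < b)
    (hb' : b < b') (hx : 0 < x) :
    ∃ C a, 0 < a ∧ a < x ∧ (∀ s, a < s → 0 < invSlope m τ C b s) ∧
      (∀ s, a ≤ s → invSlope m τ C b s ≤ (s - a) / b) ∧
      ∀ s, x ≤ s → s / b' ≤ invSlope m τ C b s := by
  set η := 1 - (τ + 1) * m with hη
  have hη0 : 0 < η := sub_pos.2 hθ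
  obtain ⟨a, ha, hax, hroot⟩ : ∃ a, 0 < a ∧ a < x ∧ a ^ η = (1 - b / b') * x ^ η := by
    have hq : 0 < 1 - b / b' := sub_pos.2 ((div_lt_one (hb.trans hb')).2 hb')
    have hq1 : 1 - b / b' < 1 := sub_lt_self 1 (div_pos hb (hb.trans hb'))
    refine ⟨(1 - b / b') ^ η⁻¹ * x, by positivity,
      mul_lt_of_lt_one_left hx (Real.rpow_lt_one hq.le hq1 (inv_pos.2 hη0)), ?_⟩
    rw [Real.mul_rpow (by positivity) hx.le, Real.rpow_inv_rpow hq.le hη0.ne']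
  have hC : (1 / b - 1 / b') * x ^ η = 1 / b * a ^ η := by
    rw [hroot]
    field_simp
  refine ⟨-(1 / b * a ^ η), a, ha, hax, fun s hs => ?_, fun s hs => ?_, fun s hs => ?_⟩
  · have hs0 : 0 < s := ha.trans hs
    have hpow := sub_pos.2 (Real.rpow_lt_rpow ha.le hs hη0)
    rw [invSlope_neg_mul _ _ hs0, sub_self, zero_mul, zero_add]
    positivity
  · have hpow : a ≤ a ^ η * s ^ ((τ + 1) * m) := by
      calc a = a ^ η * a ^ ((τ + 1) * m) := by
            rw [← Real.rpow_add ha, hη, sub_add_cancel, Real.rpow_one]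
        _ ≤ a ^ η * s ^ ((τ + 1) * m) := by gcongr
    have hdiv := mul_le_mul_of_nonneg_left hpow (one_div_pos.2 hb).le
    rw [invSlope, sub_div, div_eq_mul_one_div a]
    linarith
  · have hs0 : 0 < s := hx.trans_le hs
    have hpow := sub_nonneg.2 (Real.rpow_le_rpow hx.le hs hη0.le)
    have hpos := mul_nonneg (sub_pos.2 (one_div_lt_one_div_of_lt hb hb')).le
      (mul_nonneg (Real.rpow_nonneg hs0.le ((τ + 1) * m)) hpow)
    rw [← hC, invSlope_neg_mul _ _ hs0, sub_sub_cancel, one_div_mul_eq_div]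
    linarith

lemma tendsto_neg_barrier_atTop (hβ : (β + 1) * m = 1) (hβ0 : 0 < β) (ha : 0 ≤ a) (hb : 0 < b)
    (haR : a < R) (hD : ∀ s, a < s → 0 < invSlope m τ C b s)
    (hle : ∀ s, a ≤ s → invSlope m τ C b s ≤ (s - a) / b) :
    Tendsto (fun r => -barrier m τ β C b R r) (𝓝[>] a) atTop := by
  have hsub : Tendsto (fun r : ℝ => r - a) (𝓝[>] a) (𝓝[>] 0) := by
    refine tendsto_nhdsWithin_iff.2 ⟨?_, eventually_nhdsWithin_of_forall fun r hr =>
      mem_Ioi.2 (sub_pos.2 (mem_Ioi.1 hr))⟩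
    have : Continuous fun r : ℝ => r - a := by fun_prop
    simpa using (this.tendsto a).mono_left nhdsWithin_le_nhds
  have hlim : Tendsto (fun r => b ^ (β + 1) / β * ((r - a) ^ (-β) - (R - a) ^ (-β))) (𝓝[>] a)
      atTop :=
    (tendsto_atTop_add_const_right _ _ ((tendsto_rpow_neg_nhdsGT_zero (neg_lt_zero.2 hβ0)).comp
      hsub)).const_mul_atTop (by positivity)
  refine tendsto_atTop_mono' _ ?_ hlim
  filter_upwards [Ioo_mem_nhdsGT haR] with r hr
  exact rpow_le_neg_barrier hβ hβ0 ha hD hb hr.1 hr.1 hr.2.le fun s hs => hle s (hr.1.le.trans hs)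

end Barrier

/-! ### Barriers for punctured solutions -/

/-- A nonnegative solution on a punctured ball of radius `R ≤ 1`, bounded by `A` on its boundary. -/
structure PuncturedSol {E : Type*} [NormedAddCommGroup E] [InnerProductSpace ℝ E]
    [FiniteDimensional ℝ E] (p m R A : ℝ) (u : E → ℝ) : Prop where
  radius_pos : 0 < R
  radius_le_one : R ≤ 1
  bound_nonneg : 0 ≤ A
  solAt : ∀ x, 0 < ‖x‖ → ‖x‖ ≤ R → SolAt p (m + 1) 1 u x
  nonneg : ∀ x, 0 < ‖x‖ → ‖x‖ ≤ R → 0 ≤ u x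
  le_bound : ∀ x, ‖x‖ = R → u x ≤ A

namespace PuncturedSol

variable {E : Type*} [NormedAddCommGroup E] [InnerProductSpace ℝ E] [FiniteDimensional ℝ E]
  {p m τ β R A : ℝ} {u : E → ℝ}

lemma solAt_annulus (hu : PuncturedSol p m R A u) {a b : ℝ} (ha : 0 < a) (hb : b ≤ R) :
    ∀ x ∈ annulus (0 : E) a b, SolAt p (m + 1) 1 u x := by
  rintro x ⟨hxa, hxb⟩
  rw [sub_zero] at hxa hxb
  exact hu.solAt x (ha.trans_le hxa) (hxb.trans hb)

lemma le_radialFund (hu : PuncturedSol p m R A u) (hP : Subcritical (finrank ℝ E) p m τ β)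
    {k B r r' : ℝ} (hk : 0 < k) (hr : 0 < r) (hr' : r' ≤ R)
    (hle : ∀ x, ‖x‖ = r → u x ≤ k * radialFund τ r + B)
    (hle' : ∀ x, ‖x‖ = r' → u x ≤ k * radialFund τ r' + B) :
    ∀ x, r ≤ ‖x‖ → ‖x‖ ≤ r' → u x ≤ k * radialFund τ ‖x‖ + B := by
  have hslope : ∀ t : ℝ, r < t → 0 < k * t ^ (-τ - 1) := fun t ht => by
    have := hr.trans ht
    positivity
  refine le_of_strict_radial_supersolution (f := fun t => k * radialFund τ t + B)
    hP.one_lt.le hr (hu.solAt_annulus hr hr')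
    (fun t ht => ((hasDerivAt_radialFund hP.tau_nonneg (hr.trans_le ht)).const_mul k).add_const B)
    (fun t ht => ((hasDerivAt_const_mul_rpow (-k) (-τ - 1) (hr.trans ht)).congr_of_eventuallyEq
      (.of_forall fun s => by ring)))
    (fun t ht _ => by linarith [hslope t ht]) (fun t ht _ => ?_) hle hle'
  have ht0 : 0 < t := hr.trans ht
  have hpow : 0 < 1 * |k * -t ^ (-τ - 1)| ^ (m + 1) := by
    rw [mul_neg, abs_neg, one_mul]
    exact Real.rpow_pos_of_pos (abs_pos.2 (hslope t ht).ne') _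
  refine lt_of_eq_of_lt ?_ hpow
  rw [Real.rpow_sub_one ht0.ne' (-τ - 1)]
  linear_combination k * (t ^ (-τ - 1) / t) * hP.dim

lemma le_const (hu : PuncturedSol p m R A u) (hP : Subcritical (finrank ℝ E) p m τ β)
    {B r r' : ℝ} (hr : 0 < r) (hr' : r' ≤ R)
    (hle : ∀ x, ‖x‖ = r → u x ≤ B) (hle' : ∀ x, ‖x‖ = r' → u x ≤ B) :
    ∀ x, r ≤ ‖x‖ → ‖x‖ ≤ r' → u x ≤ B := by
  intro x hx hx'
  have hfund : ∀ t, r ≤ t → t ≤ r' → 0 ≤ radialFund τ t := fun t ht ht' =>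
    radialFund_nonneg hP.tau_nonneg (hr.trans_le ht) (ht'.trans (hr'.trans hu.radius_le_one))
  have hcomp : ∀ k : ℝ, 0 < k → u x ≤ k * radialFund τ ‖x‖ + B := fun k hk =>
    hu.le_radialFund hP hk hr hr'
      (fun y hy => (hle y hy).trans
        (le_add_of_nonneg_left (mul_nonneg hk.le (hfund r le_rfl (hx.trans hx')))))
      (fun y hy => (hle' y hy).trans
        (le_add_of_nonneg_left (mul_nonneg hk.le (hfund r' (hx.trans hx') le_rfl)))) x hx hx'
  have hlim : Tendsto (fun k : ℝ => k * radialFund τ ‖x‖ + B) (𝓝[>] 0) (𝓝 B) := by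
    have : Continuous fun k : ℝ => k * radialFund τ ‖x‖ + B := by fun_prop
    simpa using (this.tendsto 0).mono_left nhdsWithin_le_nhds
  exact ge_of_tendsto hlim (eventually_nhdsWithin_of_forall hcomp)

lemma exists_bound (hu : PuncturedSol p m R A u) {r : ℝ} (hr : 0 < r) :
    ∃ M, ∀ x, r ≤ ‖x‖ → ‖x‖ ≤ R → u x ≤ M := by
  have hcont : ContinuousOn u (annulus (0 : E) r R) := fun x hx =>
    (hu.solAt_annulus hr le_rfl x hx).1.continuousAt.continuousWithinAt
  obtain ⟨M, hM⟩ := ((isCompact_annulus (0 : E) r R).image_of_continuousOn hcont).bddAbove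
  exact ⟨M, fun x hx hxR => hM ⟨x, ⟨by rwa [sub_zero], by rwa [sub_zero]⟩, rfl⟩⟩

section
variable {a b C r : ℝ}

lemma le_neg_barrier (hu : PuncturedSol p m R A u) (hP : Subcritical (finrank ℝ E) p m τ β)
    (ha : 0 ≤ a) (hD : ∀ s, a < s → 0 < invSlope m τ C b s) (hb : (p - 1) * (β - τ) < b)
    (har : a < r) (hrR : r ≤ R) (hle : ∀ x, ‖x‖ = r → u x ≤ -barrier m τ β C b R r + A) :
    ∀ x, r ≤ ‖x‖ → ‖x‖ ≤ R → u x ≤ -barrier m τ β C b R ‖x‖ + A := by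
  have hr : 0 < r := ha.trans_lt har
  have hg : ∀ t, r < t → 0 < barrierSlope m τ β C b t := fun t ht =>
    Real.rpow_pos_of_pos (hD t (har.trans ht)) _
  refine le_of_strict_radial_supersolution (f := fun t => -barrier m τ β C b R t + A)
    hP.one_lt.le hr (hu.solAt_annulus hr le_rfl)
    (fun t ht => (hasDerivAt_barrier hP.beta_mul ha hD (har.trans_le hrR)
      (har.trans_le ht)).neg.add_const A)
    (fun t ht => (hasDerivAt_barrierSlope hP.beta_mul (hr.trans ht) (hD t (har.trans ht))).neg)
    (fun t ht _ => neg_ne_zero.2 (hg t ht).ne') (fun t ht _ => ?_) hle fun x hx => by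
      rw [barrier_self, neg_zero, zero_add]
      exact hu.le_bound x hx
  rw [abs_neg, abs_of_pos (hg t ht)]
  have hlt := mul_lt_mul_of_pos_right ((div_lt_one (hP.b_pos.trans hb)).2 hb)
    (Real.rpow_pos_of_pos (hg t ht) (m + 1))
  refine lt_of_eq_of_lt ?_ hlt
  linear_combination (barrierSlope m τ β C b t / t) * hP.dim

lemma neg_barrier_le (hu : PuncturedSol p m R A u) (hP : Subcritical (finrank ℝ E) p m τ β)
    (hD : ∀ s, 0 < s → 0 < invSlope m τ C b s) (hb0 : 0 < b) (hb : b < (p - 1) * (β - τ))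
    (hr : 0 < r) (hle : ∀ x, ‖x‖ = r → -barrier m τ β C b R r ≤ u x) :
    ∀ x, r ≤ ‖x‖ → ‖x‖ ≤ R → -barrier m τ β C b R ‖x‖ ≤ u x := by
  have hg : ∀ t, r < t → 0 < barrierSlope m τ β C b t := fun t ht =>
    Real.rpow_pos_of_pos (hD t (hr.trans ht)) _
  intro x hx hxR
  rw [neg_le]
  revert x
  refine le_of_strict_radial_supersolution hP.one_lt.le hr
    (fun y hy => (hu.solAt_annulus hr le_rfl y hy).neg)
    (fun t ht => hasDerivAt_barrier hP.beta_mul le_rfl hD hu.radius_pos (hr.trans_le ht))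
    (fun t ht => hasDerivAt_barrierSlope hP.beta_mul (hr.trans ht) (hD t (hr.trans ht)))
    (fun t ht _ => (hg t ht).ne') (fun t ht _ => ?_)
    (fun x hx => neg_le.1 (hle x hx)) fun x hx => by
      rw [barrier_self, neg_nonpos]
      exact hu.nonneg x (hx ▸ hu.radius_pos) hx.le
  rw [abs_of_pos (hg t ht)]
  have hlt := mul_lt_mul_of_pos_right ((one_lt_div hb0).2 hb)
    (Real.rpow_pos_of_pos (hg t ht) (m + 1))
  refine lt_of_eq_of_lt ?_ ((neg_lt_neg hlt).trans_eq (by ring))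
  linear_combination -(barrierSlope m τ β C b t / t) * hP.dim

end

/-- The barrier blows up on the sphere of radius `a > 0`, whence no a priori bound at the origin is
needed. -/
lemma le_sharp (hu : PuncturedSol p m R A u) (hP : Subcritical (finrank ℝ E) p m τ β) {b : ℝ}
    (hb : (p - 1) * (β - τ) < b) :
    ∀ x, 0 < ‖x‖ → ‖x‖ ≤ R → u x ≤ b ^ (β + 1) / β * ‖x‖ ^ (-β) + A := by
  intro x hx hxR
  obtain ⟨b₁, hb₁, hb₁b⟩ := exists_between hb
  have hb₁0 : 0 < b₁ := hP.b_pos.trans hb₁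
  have hθ : 0 ≤ (τ + 1) * m := mul_nonneg (by linarith [hP.tau_nonneg]) hP.m_pos.le
  obtain ⟨C, a, ha, hax, hpos, hle, hge⟩ :=
    exists_le_invSlope hθ hP.tau_add_one_mul_lt_one hb₁0 hb₁b hx
  obtain ⟨M, hM⟩ := hu.exists_bound ha
  obtain ⟨r, hr, har, hrx⟩ := (((tendsto_neg_barrier_atTop hP.beta_mul hP.beta_pos ha.le hb₁0
    (hax.trans_le hxR) hpos hle).eventually_ge_atTop M).and (Ioo_mem_nhdsGT hax)).exists
  have hrR : r ≤ R := hrx.le.trans hxR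
  calc u x ≤ -barrier m τ β C b₁ R ‖x‖ + A :=
        hu.le_neg_barrier hP ha.le hpos hb₁ har hrR
          (fun y hy => by linarith [hM y (hy ▸ har.le) (hy.trans_le hrR), hu.bound_nonneg])
          x hrx.le hxR
    _ ≤ b ^ (β + 1) / β * ‖x‖ ^ (-β) + A := by
        gcongr
        exact neg_barrier_le_rpow hP.beta_mul hP.beta_pos ha.le hpos (hb₁0.trans hb₁b) hax hxR hge

lemma exists_le_rpow (hu : PuncturedSol p m R A u) (hP : Subcritical (finrank ℝ E) p m τ β) :
    ∃ C > 0, ∀ x, 0 < ‖x‖ → ‖x‖ ≤ R → u x ≤ C * ‖x‖ ^ (-β) := by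
  have hβ := hP.beta_pos
  have hb := hP.b_pos
  have hA := hu.bound_nonneg
  refine ⟨((p - 1) * (β - τ) + 1) ^ (β + 1) / β + A, by positivity, fun x hx hxR => ?_⟩
  have hone : 1 ≤ ‖x‖ ^ (-β) :=
    Real.one_le_rpow_of_pos_of_le_one_of_nonpos hx (hxR.trans hu.radius_le_one) (by linarith)
  linarith [hu.le_sharp hP (lt_add_one _) x hx hxR, le_mul_of_one_le_right hA hone]

lemma ge_sharp (hu : PuncturedSol p m R A u) (hP : Subcritical (finrank ℝ E) p m τ β)
    (hdom : ∀ K, ∃ᶠ r in 𝓝[>] (0 : ℝ), ∀ x, ‖x‖ = r → K * radialFund τ r ≤ u x)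
    {b : ℝ} (hb0 : 0 < b) (hb : b < (p - 1) * (β - τ)) :
    ∀ x, 0 < ‖x‖ → ‖x‖ ≤ R → b ^ (β + 1) / β * (‖x‖ ^ (-β) - R ^ (-β)) ≤ u x := by
  intro x hx hxR
  obtain ⟨b₁, hbb₁, hb₁⟩ := exists_between hb
  have hb₁0 : 0 < b₁ := hb0.trans hbb₁
  obtain ⟨C, hC, hle⟩ := exists_invSlope_le hP.tau_add_one_mul_lt_one hb0 hbb₁ hx
  have hpos : ∀ s, 0 < s → 0 < invSlope m τ C b₁ s := fun s hs => invSlope_pos hC.le hb₁0 hs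
  obtain ⟨r, hr, hr0, hrx⟩ :=
    ((hdom (C ^ (-(β + 1)))).and_eventually (Ioo_mem_nhdsGT hx)).exists
  have hfund := neg_barrier_le_radialFund hP.beta_mul hP.beta_pos.le hP.tau_nonneg hb₁0 hC hpos hr0
    (hrx.le.trans hxR) hu.radius_le_one
  calc b ^ (β + 1) / β * (‖x‖ ^ (-β) - R ^ (-β)) ≤ -barrier m τ β C b₁ R ‖x‖ := by
        simpa only [sub_zero] using rpow_le_neg_barrier hP.beta_mul hP.beta_pos le_rfl hpos hb0 hx
          hx hxR fun s hs => (hle s hs).trans_eq (by rw [sub_zero])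
    _ ≤ u x :=
        hu.neg_barrier_le hP hpos hb₁0 hb₁ hr0 (fun y hy => hfund.trans (hr y hy)) x hrx.le hxR

lemma eventually_norm_le (hu : PuncturedSol p m R A u) :
    ∀ᶠ x : E in 𝓝[≠] 0, 0 < ‖x‖ ∧ ‖x‖ ≤ R := by
  filter_upwards [self_mem_nhdsWithin,
    nhdsWithin_le_nhds (closedBall_mem_nhds (0 : E) hu.radius_pos)] with x hx hxR
  exact ⟨norm_pos_iff.2 hx, by simpa using hxR⟩

lemma eventually_rpow_mul_lt (hu : PuncturedSol p m R A u)
    (hP : Subcritical (finrank ℝ E) p m τ β) {l : ℝ}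
    (hl : ((p - 1) * (β - τ)) ^ (β + 1) / β < l) : ∀ᶠ x : E in 𝓝[≠] 0, ‖x‖ ^ β * u x < l := by
  have hcont : ContinuousAt (fun b : ℝ => b ^ (β + 1) / β) ((p - 1) * (β - τ)) :=
    (Real.continuousAt_rpow_const _ _ (Or.inl hP.b_pos.ne')).div_const β
  obtain ⟨b, hbl, hb⟩ := (((hcont.tendsto.mono_left nhdsWithin_le_nhds).eventually_lt_const
    hl).and (self_mem_nhdsWithin (s := Ioi ((p - 1) * (β - τ))))).exists
  have hlim : Tendsto (fun x : E => b ^ (β + 1) / β + ‖x‖ ^ β * A) (𝓝[≠] 0)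
      (𝓝 (b ^ (β + 1) / β)) := by
    simpa using (((tendsto_rpow_nhdsGT_zero hP.beta_pos).comp
      tendsto_norm_nhdsNE_zero).mul_const A).const_add (b ^ (β + 1) / β)
  filter_upwards [hlim.eventually_lt_const hbl, hu.eventually_norm_le] with x hx ⟨hx0, hxR⟩
  have hcancel : ‖x‖ ^ β * ‖x‖ ^ (-β) = 1 := by
    rw [← Real.rpow_add hx0, add_neg_cancel, Real.rpow_zero]
  calc ‖x‖ ^ β * u x ≤ ‖x‖ ^ β * (b ^ (β + 1) / β * ‖x‖ ^ (-β) + A) := by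
        gcongr
        exact hu.le_sharp hP hb x hx0 hxR
    _ = b ^ (β + 1) / β + ‖x‖ ^ β * A := by linear_combination b ^ (β + 1) / β * hcancel
    _ < l := hx

lemma eventually_lt_rpow_mul (hu : PuncturedSol p m R A u)
    (hP : Subcritical (finrank ℝ E) p m τ β)
    (hdom : ∀ K, ∃ᶠ r in 𝓝[>] (0 : ℝ), ∀ x, ‖x‖ = r → K * radialFund τ r ≤ u x) {l : ℝ}
    (hl : l < ((p - 1) * (β - τ)) ^ (β + 1) / β) : ∀ᶠ x : E in 𝓝[≠] 0, l < ‖x‖ ^ β * u x := by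
  have hcont : ContinuousAt (fun b : ℝ => b ^ (β + 1) / β) ((p - 1) * (β - τ)) :=
    (Real.continuousAt_rpow_const _ _ (Or.inl hP.b_pos.ne')).div_const β
  obtain ⟨b, hbl, hb0, hb⟩ := (((hcont.tendsto.mono_left nhdsWithin_le_nhds).eventually_const_lt
    hl).and (Ioo_mem_nhdsLT hP.b_pos)).exists
  have hlim : Tendsto (fun x : E => b ^ (β + 1) / β * (1 - ‖x‖ ^ β * R ^ (-β))) (𝓝[≠] 0)
      (𝓝 (b ^ (β + 1) / β)) := by
    simpa using ((((tendsto_rpow_nhdsGT_zero hP.beta_pos).comp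
      tendsto_norm_nhdsNE_zero).mul_const (R ^ (-β))).const_sub 1).const_mul (b ^ (β + 1) / β)
  filter_upwards [hlim.eventually_const_lt hbl, hu.eventually_norm_le] with x hx ⟨hx0, hxR⟩
  have hcancel : ‖x‖ ^ β * ‖x‖ ^ (-β) = 1 := by
    rw [← Real.rpow_add hx0, add_neg_cancel, Real.rpow_zero]
  calc l < b ^ (β + 1) / β * (1 - ‖x‖ ^ β * R ^ (-β)) := hx
    _ = ‖x‖ ^ β * (b ^ (β + 1) / β * (‖x‖ ^ (-β) - R ^ (-β))) := by
        linear_combination -(b ^ (β + 1) / β) * hcancel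
    _ ≤ ‖x‖ ^ β * u x := by
        gcongr
        exact hu.ge_sharp hP hdom hb0 hb x hx0 hxR

lemma tendsto_rpow_mul (hu : PuncturedSol p m R A u) (hP : Subcritical (finrank ℝ E) p m τ β)
    (hdom : ∀ K, ∃ᶠ r in 𝓝[>] (0 : ℝ), ∀ x, ‖x‖ = r → K * radialFund τ r ≤ u x) :
    Tendsto (fun x : E => ‖x‖ ^ β * u x) (𝓝[≠] 0) (𝓝 (((p - 1) * (β - τ)) ^ (β + 1) / β)) :=
  tendsto_order.2 ⟨fun _ hl => hu.eventually_lt_rpow_mul hP hdom hl,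
    fun _ hl => hu.eventually_rpow_mul_lt hP hl⟩

end PuncturedSol

/-! ### Rescaling -/

section Rescaling

variable {E : Type*} [NormedAddCommGroup E] [InnerProductSpace ℝ E] {p γ r : ℝ} {u : E → ℝ}
  {y g : E}

lemma HasLineJet.rescale {H : E →L[ℝ] E} (c : ℝ) (h : HasLineJet u (r • y) g H) :
    HasLineJet (fun y => c * u (r • y)) y ((c * r) • g) ((c * r ^ 2) • H) := fun ξ => by
  have hline : (fun s : ℝ => c * u (r • (y + s • ξ))) =
      fun s : ℝ => c * u (r • y + s • r • ξ) := by
    simp only [smul_add, smul_comm r]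
  rw [hline]
  convert (h (r • ξ)).const_mul c using 1
  · simp only [inner_smul_left, inner_smul_right, conj_trivial]
    ring
  · simp only [map_smul, smul_apply, inner_smul_left, inner_smul_right, conj_trivial]
    ring

lemma norm_smul_of_mem_annulus (hr : 0 < r) (hy : y ∈ annulus (0 : E) 1 3) :
    r ≤ ‖r • y‖ ∧ ‖r • y‖ ≤ r * 3 := by
  obtain ⟨hy, hy'⟩ := hy
  rw [sub_zero] at hy hy'
  rw [norm_smul, Real.norm_of_nonneg hr.le]
  exact ⟨le_mul_of_one_le_right hr.le hy, by gcongr⟩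

lemma norm_inv_smul_eq_two (hr : 0 < r) {x : E} (hx : ‖x‖ = r * 2) : ‖r⁻¹ • x‖ = 2 := by
  rw [norm_smul, norm_inv, Real.norm_of_nonneg hr.le, hx, inv_mul_cancel_left₀ hr.ne']

lemma rescale_le_of_le_radialFund {τ k A R Λ : ℝ} (hτ : 0 ≤ τ) (hk : 0 ≤ k)
    (hle : ∀ x, 0 < ‖x‖ → ‖x‖ ≤ R → u x ≤ k * radialFund τ ‖x‖ + A) (hΛ : 0 < Λ)
    (hr : 0 < r) (hrR : r * 3 ≤ R) (hfund : 0 < radialFund τ r) (hy : y ∈ annulus (0 : E) 1 3) :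
    (Λ * radialFund τ r)⁻¹ * u (r • y) ≤
      k / Λ * ‖y‖ ^ (-τ) + A / (Λ * radialFund τ r) := by
  obtain ⟨hry, hry'⟩ := norm_smul_of_mem_annulus hr hy
  have hy1 : 1 ≤ ‖y‖ := by simpa only [sub_zero] using hy.1
  rw [inv_mul_le_iff₀ (by positivity)]
  calc u (r • y) ≤ k * radialFund τ (r * ‖y‖) + A := by
        simpa only [norm_smul, Real.norm_of_nonneg hr.le] using
          hle (r • y) (hr.trans_le hry) (hry'.trans hrR)
    _ ≤ k * (radialFund τ r * ‖y‖ ^ (-τ)) + A := by gcongr; exact radialFund_mul_le hτ hr hy1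
    _ = Λ * radialFund τ r * (k / Λ * ‖y‖ ^ (-τ) + A / (Λ * radialFund τ r)) := by field_simp

lemma rescale_le_one_of_le_radialFund {τ k A R : ℝ} (hτ : 0 ≤ τ) (hk : 0 ≤ k)
    (hle : ∀ x, 0 < ‖x‖ → ‖x‖ ≤ R → u x ≤ k * radialFund τ ‖x‖ + A)
    (hr : 0 < r) (hrR : r * 3 ≤ R) (hfund : 0 < radialFund τ r) (hA : A ≤ radialFund τ r)
    (hy : y ∈ annulus (0 : E) 1 3) : ((k + 1) * radialFund τ r)⁻¹ * u (r • y) ≤ 1 := by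
  have hΛ : 0 < k + 1 := by positivity
  have hpow : ‖y‖ ^ (-τ) ≤ 1 := Real.rpow_le_one_of_one_le_of_nonpos
    (by simpa only [sub_zero] using hy.1) (neg_nonpos.2 hτ)
  calc _ ≤ k / (k + 1) * ‖y‖ ^ (-τ) + A / ((k + 1) * radialFund τ r) :=
        rescale_le_of_le_radialFund hτ hk hle hΛ hr hrR hfund hy
    _ ≤ k / (k + 1) * 1 + radialFund τ r / ((k + 1) * radialFund τ r) := by gcongr
    _ = 1 := by field_simp

variable [FiniteDimensional ℝ E]

lemma hasGradientAt_rescale (c : ℝ) (h : HasGradientAt u g (r • y)) :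
    HasGradientAt (fun y => c * u (r • y)) ((c * r) • g) y := by
  rw [hasGradientAt_iff_hasFDerivAt] at h ⊢
  refine ((h.comp y ((hasFDerivAt_id y).const_smul r)).const_mul c).congr_fderiv ?_
  ext ξ
  simp [mul_assoc]

lemma SolAt.rescale {T : ℝ} (hr : 0 < r) (hT : 0 < T) (hu : SolAt p γ 1 u (r • y)) :
    SolAt p γ (T ^ (γ - 1) * r ^ (2 - γ)) (fun y => T⁻¹ * u (r • y)) y := by
  obtain ⟨hdiff, hjet⟩ := hu
  have hgrad := hasGradientAt_rescale T⁻¹ hdiff.hasGradientAt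
  have hc : T⁻¹ * r ≠ 0 := by positivity
  refine ⟨(hasGradientAt_iff_hasFDerivAt.1 hgrad).differentiableAt, fun hne => ?_⟩
  rw [hgrad.gradient] at hne ⊢
  obtain ⟨H, hH, htrace⟩ := hjet (right_ne_zero_of_smul hne)
  refine ⟨_, hH.rescale T⁻¹, ?_⟩
  rw [pTrace_smul, pTrace_smul_left p hc, htrace, norm_smul, Real.norm_of_nonneg (by positivity),
    Real.mul_rpow (by positivity) (norm_nonneg _), one_mul, Real.mul_rpow (by positivity) hr.le,
    Real.inv_rpow hT.le, Real.rpow_sub hT, Real.rpow_sub hr, Real.rpow_one, Real.rpow_two]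
  field_simp

end Rescaling

lemma Subcritical.rescale_coeff_le {N p m τ β T C r : ℝ} (hP : Subcritical N p m τ β) (hT : 0 ≤ T)
    (hC : 0 ≤ C) (hr : 0 < r) (h : T ≤ C * r ^ (-β)) : T ^ m * r ^ (1 - m) ≤ C ^ m :=
  calc T ^ m * r ^ (1 - m) ≤ (C * r ^ (-β)) ^ m * r ^ (1 - m) := by
        gcongr
        exact hP.m_pos.le
    _ = C ^ m * r ^ (-β * m + (1 - m)) := by
        rw [Real.mul_rpow hC (by positivity), ← Real.rpow_mul hr.le, mul_assoc, Real.rpow_add hr]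
    _ = C ^ m := by
        rw [show -β * m + (1 - m) = 0 by linarith [hP.beta_mul], Real.rpow_zero, mul_one]

lemma tendsto_mul_const_nhdsGT_zero {c : ℝ} (hc : 0 < c) :
    Tendsto (fun r : ℝ => r * c) (𝓝[>] 0) (𝓝[>] 0) := by
  simpa only [zero_mul, id_eq] using TendstoNhdsWithinIoi.mul_const hc (c := (0 : ℝ)) tendsto_id

lemma exists_doubling_radius {M : ℝ → ℝ} {C β ρ : ℝ} (hρ : 0 < ρ) (hpos : 0 < M ρ)
    (hle : ∀ r, 0 < r → r ≤ ρ → M r ≤ C * r ^ (-β)) :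
    ∃ r, 0 < r ∧ r * 2 ≤ ρ ∧ M r ≤ 2 * 2 ^ β * M (r * 2) := by
  by_contra! hcon
  have hgrow : ∀ n : ℕ, 2 ^ n * (ρ ^ β * M ρ) ≤ (ρ / 2 ^ n) ^ β * M (ρ / 2 ^ n) := by
    intro n
    induction n with
    | zero => simp
    | succ n ih =>
      set r := ρ / 2 ^ (n + 1)
      have hr : 0 < r := by positivity
      have hr2 : ρ / 2 ^ n = r * 2 := by
        rw [div_mul_eq_mul_div, pow_succ, mul_div_mul_right _ _ two_ne_zero]
      have hr2ρ : r * 2 ≤ ρ := hr2 ▸ div_le_self hρ.le (one_le_pow₀ one_le_two)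
      rw [hr2] at ih
      calc 2 ^ (n + 1) * (ρ ^ β * M ρ) = 2 * (2 ^ n * (ρ ^ β * M ρ)) := by ring
        _ ≤ 2 * ((r * 2) ^ β * M (r * 2)) := by gcongr
        _ = r ^ β * (2 * 2 ^ β * M (r * 2)) := by rw [Real.mul_rpow hr.le zero_le_two]; ring
        _ ≤ r ^ β * M r := by gcongr; exact (hcon r hr hr2ρ).le
  have hbdd : ∀ r, 0 < r → r ≤ ρ → r ^ β * M r ≤ C := fun r hr hrρ => by
    have := hle r hr hrρ
    rwa [Real.rpow_neg hr.le, ← div_eq_mul_inv, le_div_iff₀' (by positivity)] at this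
  obtain ⟨n, hn⟩ := ((tendsto_pow_atTop_atTop_of_one_lt one_lt_two).atTop_mul_const
    (show 0 < ρ ^ β * M ρ by positivity)).eventually_gt_atTop C |>.exists
  exact hn.not_ge ((hgrow n).trans
    (hbdd _ (by positivity) (div_le_self hρ.le (one_le_pow₀ one_le_two))))

/-! ### The alternative -/

/-- The positive multiples of the fundamental solution that control `u` on arbitrarily small
spheres. -/
def sphereBounds {E : Type*} [NormedAddCommGroup E] (τ : ℝ) (u : E → ℝ) : Set ℝ :=
  {k | 0 < k ∧ ∃ᶠ r in 𝓝[>] (0 : ℝ), ∀ x : E, ‖x‖ = r → u x ≤ k * radialFund τ r}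

namespace PuncturedSol

variable {E : Type*} [NormedAddCommGroup E] [InnerProductSpace ℝ E] [FiniteDimensional ℝ E]
  {p m τ β R A r k : ℝ} {u : E → ℝ}

lemma exists_max_sphere (hN : 2 ≤ finrank ℝ E) (hu : PuncturedSol p m R A u) (hr : 0 < r)
    (hrR : r ≤ R) : ∃ x : E, ‖x‖ = r ∧ ∀ y : E, ‖y‖ = r → u y ≤ u x := by
  have : Nontrivial E := Module.nontrivial_of_finrank_pos (R := ℝ) (by omega)
  have hcont : ContinuousOn u (sphere (0 : E) r) := fun x hx => by
    rw [mem_sphere_zero_iff_norm] at hx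
    exact (hu.solAt x (hr.trans_eq hx.symm) (hx.trans_le hrR)).1.continuousAt.continuousWithinAt
  obtain ⟨x, hx, hmax⟩ := (isCompact_sphere (0 : E) r).exists_isMaxOn
    (NormedSpace.sphere_nonempty.2 hr.le) hcont
  exact ⟨x, by simpa using hx, fun y hy => hmax (by simpa using hy)⟩

lemma solAt_rescale (hu : PuncturedSol p m R A u) {T : ℝ} (hr : 0 < r) (hrR : r * 3 ≤ R)
    (hT : 0 < T) : ∀ y ∈ annulus (0 : E) 1 3,
      SolAt p (m + 1) (T ^ m * r ^ (1 - m)) (fun y => T⁻¹ * u (r • y)) y := by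
  intro y hy
  obtain ⟨hry, hry'⟩ := norm_smul_of_mem_annulus hr hy
  have := (hu.solAt _ (hr.trans_le hry) (hry'.trans hrR)).rescale hr hT
  rwa [add_sub_cancel_right, show 2 - (m + 1) = 1 - m by ring] at this

lemma rescale_mem_Icc (hu : PuncturedSol p m R A u) (hP : Subcritical (finrank ℝ E) p m τ β)
    {T : ℝ} (hr : 0 < r) (hrR : r * 3 ≤ R) (hT : 0 < T) (hle : ∀ x, ‖x‖ = r → u x ≤ T)
    (hAT : A ≤ T) : ∀ y ∈ annulus (0 : E) 1 3, T⁻¹ * u (r • y) ∈ Icc 0 1 := by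
  intro y hy
  obtain ⟨hry, hry'⟩ := norm_smul_of_mem_annulus hr hy
  refine ⟨mul_nonneg (inv_nonneg.2 hT.le) (hu.nonneg _ (hr.trans_le hry) (hry'.trans hrR)), ?_⟩
  rw [inv_mul_le_one₀ hT]
  exact hu.le_const hP hr le_rfl hle (fun x hx => (hu.le_bound x hx).trans hAT) _ hry
    (hry'.trans hrR)

lemma exists_mul_le_of_doubling (hN : 2 ≤ finrank ℝ E) (hu : PuncturedSol p m R A u)
    (hP : Subcritical (finrank ℝ E) p m τ β) {C Q : ℝ} (hC : 0 ≤ C) (hQ : 0 < Q) :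
    ∃ δ > 0, ∀ r T, 0 < r → r * 3 ≤ R → 0 < T → A ≤ T → T ≤ C * r ^ (-β) →
      (∀ x, ‖x‖ = r → u x ≤ T) → (∃ x, ‖x‖ = r * 2 ∧ T ≤ Q * u x) →
      ∀ x, ‖x‖ = r * 2 → T * δ ≤ u x := by
  obtain ⟨δ, hδ, hgap⟩ := exists_gap_sphere_of_gap_point (E := E) (γ := m + 1) (Λ := C ^ m)
    (κ := 0) hN hP.one_lt (by linarith [hP.m_pos]) (by linarith [hP.m_lt_one]) (by positivity)
    hP.dim hP.tau_nonneg le_rfl (inv_pos.2 hQ)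
  refine ⟨δ, hδ, fun r T hr hrR hT hAT hTC hle ⟨x₀, hx₀, hx₀T⟩ x hx => ?_⟩
  have hIcc := hu.rescale_mem_Icc hP hr hrR hT hle hAT
  have hbelow : IsBelowProfile p (m + 1) (C ^ m) τ 0 (-(T ^ m * r ^ (1 - m))) 0
      (fun y => -(T⁻¹ * u (r • y))) :=
    { abs_le := by
        rw [abs_neg, abs_of_nonneg (by positivity)]
        exact hP.rescale_coeff_le hT.le hC hr hTC
      eq_zero_or_nonneg := Or.inl (zero_mul _)
      solAt := fun y hy => (hu.solAt_rescale hr hrR hT y hy).neg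
      le := fun y hy => by linarith [(hIcc y hy).1] }
  have hosc : ∀ y ∈ annulus (0 : E) 1 3, ∀ y' ∈ annulus (0 : E) 1 3,
      -(T⁻¹ * u (r • y)) - -(T⁻¹ * u (r • y')) ≤ 1 := fun y hy y' hy' => by
    linarith [(hIcc y hy).1, (hIcc y' hy').2]
  have hpoint : -(T⁻¹ * u (r • r⁻¹ • x₀)) ≤ 0 * 2 ^ (-τ) + 0 - Q⁻¹ := by
    rw [smul_inv_smul₀ hr.ne', zero_mul, zero_add, zero_sub, neg_le_neg_iff, le_inv_mul_iff₀ hT,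
      ← div_eq_mul_inv, div_le_iff₀' hQ]
    exact hx₀T
  have hsphere := hgap _ _ _ hbelow hosc ⟨_, norm_inv_smul_eq_two hr hx₀, hpoint⟩ _
    (norm_inv_smul_eq_two hr hx)
  rwa [smul_inv_smul₀ hr.ne', zero_mul, zero_add, zero_sub, neg_le_neg_iff,
    le_inv_mul_iff₀ hT] at hsphere

lemma frequently_exists_doubling (hN : 2 ≤ finrank ℝ E) (hu : PuncturedSol p m R A u)
    (hP : Subcritical (finrank ℝ E) p m τ β) {L : ℝ} (hL : 0 < L)
    (h : ∀ᶠ r in 𝓝[>] (0 : ℝ), ∃ x : E, ‖x‖ = r ∧ L * radialFund τ r < u x) :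
    ∃ᶠ r in 𝓝[>] (0 : ℝ), ∃ x₁ : E, ‖x₁‖ = r ∧ (∀ x, ‖x‖ = r → u x ≤ u x₁) ∧
      L * radialFund τ r < u x₁ ∧ A < u x₁ ∧ ∃ x, ‖x‖ = r * 2 ∧ u x₁ ≤ 2 * 2 ^ β * u x := by
  obtain ⟨C, -, hgrowth⟩ := hu.exists_le_rpow hP
  have hlarge : ∀ᶠ r in 𝓝[>] (0 : ℝ), A ≤ L * radialFund τ r :=
    ((tendsto_radialFund_atTop hP.tau_nonneg).const_mul_atTop hL).eventually_ge_atTop A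
  have hsmall : ∀ᶠ r in 𝓝[>] (0 : ℝ), r ≤ R :=
    nhdsWithin_le_nhds (eventually_le_nhds hu.radius_pos)
  intro hcon
  obtain ⟨ρ, hρ, hρs⟩ := mem_nhdsGT_iff_exists_Ioc_subset.1
    ((h.and hlarge).and (hsmall.and hcon))
  rw [mem_Ioi] at hρ
  choose! X hX hXmax using fun r (hr : 0 < r ∧ r ≤ ρ) =>
    hu.exists_max_sphere hN hr.1 (hρs hr).2.1
  have hLX : ∀ r, 0 < r → r ≤ ρ → L * radialFund τ r < u (X r) := fun r hr hrρ => by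
    obtain ⟨⟨⟨x, hx, hlt⟩, -⟩, -⟩ := hρs ⟨hr, hrρ⟩
    exact hlt.trans_le (hXmax r ⟨hr, hrρ⟩ x hx)
  have hAX : ∀ r, 0 < r → r ≤ ρ → A < u (X r) := fun r hr hrρ =>
    (hρs ⟨hr, hrρ⟩).1.2.trans_lt (hLX r hr hrρ)
  obtain ⟨r, hr, hr2ρ, hdouble⟩ := exists_doubling_radius (M := fun r => u (X r)) hρ
    (hu.bound_nonneg.trans_lt (hAX ρ hρ le_rfl)) fun r hr hrρ => by
      simpa only [hX r ⟨hr, hrρ⟩] using hgrowth (X r)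
        (hr.trans_eq (hX r ⟨hr, hrρ⟩).symm) ((hX r ⟨hr, hrρ⟩).trans_le (hρs ⟨hr, hrρ⟩).2.1)
  have hrρ : r ≤ ρ := by linarith
  exact (hρs ⟨hr, hrρ⟩).2.2 ⟨X r, hX r ⟨hr, hrρ⟩, hXmax r ⟨hr, hrρ⟩, hLX r hr hrρ, hAX r hr hrρ,
    X (r * 2), hX _ ⟨by positivity, hr2ρ⟩, hdouble⟩

lemma frequently_le_of_eventually_lt (hN : 2 ≤ finrank ℝ E) (hu : PuncturedSol p m R A u)
    (hP : Subcritical (finrank ℝ E) p m τ β)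
    (h : ∀ K > 0, ∀ᶠ r in 𝓝[>] (0 : ℝ), ∃ x : E, ‖x‖ = r ∧ K * radialFund τ r < u x) (K : ℝ) :
    ∃ᶠ r in 𝓝[>] (0 : ℝ), ∀ x : E, ‖x‖ = r → K * radialFund τ r ≤ u x := by
  obtain ⟨C, hC, hgrowth⟩ := hu.exists_le_rpow hP
  obtain ⟨δ, hδ, hharnack⟩ :=
    hu.exists_mul_le_of_doubling hN hP hC.le (show (0 : ℝ) < 2 * 2 ^ β by positivity)
  have hL : 0 < max K 1 / δ := by positivity
  have hsmall : ∀ᶠ r in 𝓝[>] (0 : ℝ), r ≤ R / 3 :=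
    nhdsWithin_le_nhds (eventually_le_nhds (by linarith [hu.radius_pos]))
  refine (tendsto_mul_const_nhdsGT_zero two_pos).frequently
    (((hu.frequently_exists_doubling hN hP hL (h _ hL)).and_eventually
      (eventually_mem_nhdsWithin.and hsmall)).mono ?_)
  rintro r ⟨⟨x₁, hx₁, hmax, hlarge, hA, hx₂⟩, hr, hrR⟩ x hx
  rw [mem_Ioi] at hr
  have hr2 : 0 < r * 2 := by positivity
  have hfund := antitoneOn_radialFund hP.tau_nonneg hr hr2 (by linarith)
  have hgrowth₁ : u x₁ ≤ C * r ^ (-β) := by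
    simpa only [hx₁] using hgrowth x₁ (hr.trans_eq hx₁.symm) (by linarith)
  calc K * radialFund τ (r * 2) ≤ max K 1 * radialFund τ (r * 2) := by
        gcongr
        · exact radialFund_nonneg hP.tau_nonneg hr2 (by linarith [hu.radius_le_one])
        · exact le_max_left _ _
    _ ≤ max K 1 * radialFund τ r := by gcongr
    _ = max K 1 / δ * radialFund τ r * δ := by field_simp
    _ ≤ u x₁ * δ := by gcongr
    _ ≤ u x := hharnack r _ hr (by linarith) (hu.bound_nonneg.trans_lt hA) hA.le hgrowth₁ hmax hx₂
        x hx

lemma isBelowProfile_rescale_fund (hu : PuncturedSol p m R A u)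
    (hP : Subcritical (finrank ℝ E) p m τ β) (hk : 0 < k)
    (hle : ∀ x, 0 < ‖x‖ → ‖x‖ ≤ R → u x ≤ k * radialFund τ ‖x‖ + A) {Λ : ℝ} (hΛ : 0 < Λ)
    (hr : 0 < r) (hrR : r * 3 ≤ R) (hfund : 0 < radialFund τ r)
    (hsmall : r ^ β * radialFund τ r ≤ 1) :
    IsBelowProfile p (m + 1) (Λ ^ m) τ (k / Λ) ((Λ * radialFund τ r) ^ m * r ^ (1 - m))
      (A / (Λ * radialFund τ r)) (fun y : E => (Λ * radialFund τ r)⁻¹ * u (r • y)) where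
  abs_le := by
    rw [abs_of_nonneg (by positivity)]
    refine hP.rescale_coeff_le (by positivity) hΛ.le hr ?_
    gcongr
    rwa [Real.rpow_neg hr.le, ← one_div, le_div_iff₀' (by positivity)]
  eq_zero_or_nonneg := Or.inr (by positivity)
  solAt := hu.solAt_rescale hr hrR (by positivity)
  le := fun _ hy => rescale_le_of_le_radialFund hP.tau_nonneg hk.le hle hΛ hr hrR hfund hy

lemma exists_le_sub_of_le_mul_radialFund (hN : 2 ≤ finrank ℝ E) (hu : PuncturedSol p m R A u)
    (hP : Subcritical (finrank ℝ E) p m τ β) {k₁ : ℝ} (hk₁ : 0 < k₁) (hk : k₁ < k)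
    (hle : ∀ x, 0 < ‖x‖ → ‖x‖ ≤ R → u x ≤ k * radialFund τ ‖x‖ + A) :
    ∃ δ > 0, ∀ r, 0 < r → r * 3 ≤ R → 0 < radialFund τ r → A ≤ radialFund τ r →
      r ^ β * radialFund τ r ≤ 1 → (∃ x, ‖x‖ = r * 2 ∧ u x ≤ k₁ * radialFund τ (r * 2)) →
      ∀ x, ‖x‖ = r * 2 → u x ≤ k * (radialFund τ r * 2 ^ (-τ)) + A - δ * radialFund τ r := by
  have hk0 : 0 < k := hk₁.trans hk
  have hA := hu.bound_nonneg
  have hτ := hP.tau_nonneg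
  set Λ := k + 1
  have hΛ : 0 < Λ := by positivity
  obtain ⟨δ, hδ, hgap⟩ := exists_gap_sphere_of_gap_point (E := E) (γ := m + 1) (Λ := Λ ^ m)
    (κ := k / Λ) (δ := (k - k₁) / Λ * 2 ^ (-τ)) hN hP.one_lt (by linarith [hP.m_pos])
    (by linarith [hP.m_lt_one]) (by positivity) hP.dim hτ (by positivity)
    (mul_pos (div_pos (sub_pos.2 hk) hΛ) (by positivity))
  refine ⟨δ * Λ, by positivity, fun r hr hrR hfund hAr hsmall ⟨x₀, hx₀, hux₀⟩ x hx => ?_⟩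
  have hbelow := hu.isBelowProfile_rescale_fund hP hk0 hle hΛ hr hrR hfund hsmall
  have hT : 0 < Λ * radialFund τ r := by positivity
  have hosc : ∀ y ∈ annulus (0 : E) 1 3, ∀ y' ∈ annulus (0 : E) 1 3,
      (Λ * radialFund τ r)⁻¹ * u (r • y) - (Λ * radialFund τ r)⁻¹ * u (r • y') ≤ 1 := by
    intro y hy y' hy'
    obtain ⟨hry, hry'⟩ := norm_smul_of_mem_annulus hr hy'
    exact (sub_le_self _ (mul_nonneg (by positivity)
      (hu.nonneg _ (hr.trans_le hry) (hry'.trans hrR)))).trans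
      (rescale_le_one_of_le_radialFund hτ hk0.le hle hr hrR hfund hAr hy)
  have hpoint : (Λ * radialFund τ r)⁻¹ * u (r • r⁻¹ • x₀) ≤ k / Λ * 2 ^ (-τ) +
      A / (Λ * radialFund τ r) - (k - k₁) / Λ * 2 ^ (-τ) := by
    rw [smul_inv_smul₀ hr.ne', inv_mul_le_iff₀ hT]
    calc u x₀ ≤ k₁ * (radialFund τ r * 2 ^ (-τ)) + A :=
          le_add_of_le_of_nonneg (hux₀.trans (by
            gcongr
            exact radialFund_mul_le hτ hr one_le_two)) hA
      _ = _ := by field_simp; ring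
  have hsphere := hgap _ _ _ hbelow hosc ⟨_, norm_inv_smul_eq_two hr hx₀, hpoint⟩ _
    (norm_inv_smul_eq_two hr hx)
  rw [smul_inv_smul₀ hr.ne', inv_mul_le_iff₀ hT] at hsphere
  exact hsphere.trans_eq (by field_simp)

lemma eventually_small_scale (hu : PuncturedSol p m R A u)
    (hP : Subcritical (finrank ℝ E) p m τ β) : ∀ᶠ r in 𝓝[>] (0 : ℝ),
      r * 3 ≤ R ∧ 0 < radialFund τ r ∧ A ≤ radialFund τ r ∧ r ^ β * radialFund τ r ≤ 1 := by
  have hradius : ∀ᶠ r in 𝓝[>] (0 : ℝ), r ≤ R / 3 :=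
    nhdsWithin_le_nhds (eventually_le_nhds (by linarith [hu.radius_pos]))
  have hfund := tendsto_radialFund_atTop hP.tau_nonneg
  filter_upwards [hradius, hfund.eventually_gt_atTop 0, hfund.eventually_ge_atTop A,
    (tendsto_rpow_mul_radialFund hP.tau_nonneg hP.tau_lt).eventually_le_const one_pos]
    with r hrR hr0 hAr hr1 using ⟨by linarith, hr0, hAr, hr1⟩

lemma exists_lt_mem_sphereBounds (hN : 2 ≤ finrank ℝ E) (hu : PuncturedSol p m R A u)
    (hP : Subcritical (finrank ℝ E) p m τ β) {k₁ : ℝ} (hk₁ : 0 < k₁) (hk : k₁ < k)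
    (hle : ∀ x, 0 < ‖x‖ → ‖x‖ ≤ R → u x ≤ k * radialFund τ ‖x‖ + A)
    (hlow : ∃ᶠ x : E in 𝓝[≠] 0, u x < k₁ * radialFund τ ‖x‖) :
    ∃ k₂ ∈ sphereBounds τ u, k₂ < k := by
  obtain ⟨δ, hδ, hgap⟩ := hu.exists_le_sub_of_le_mul_radialFund hN hP hk₁ hk hle
  have hk0 : 0 < k := hk₁.trans hk
  have hτ := hP.tau_nonneg
  refine ⟨max (k - δ / 2) (k / 2), ⟨lt_max_of_lt_right (half_pos hk0), ?_⟩,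
    max_lt (by linarith) (by linarith)⟩
  have hfund := tendsto_radialFund_atTop hτ
  have habsorb : ∀ᶠ t in 𝓝[>] (0 : ℝ), k * Real.log 2 + A ≤ δ / 2 * radialFund τ t :=
    (hfund.const_mul_atTop (half_pos hδ)).eventually_ge_atTop _
  refine tendsto_norm_nhdsNE_zero.frequently ((hlow.and_eventually
    (hu.eventually_norm_le.and (tendsto_norm_nhdsNE_zero.eventually
      (((tendsto_mul_const_nhdsGT_zero (inv_pos.2 two_pos)).eventually
      (hu.eventually_small_scale hP)).and habsorb)))).mono ?_)
  rintro x₀ ⟨hx₀, ⟨hpos, hxR⟩, ⟨hrR, hr0, hAr, hsmall⟩, hlarge⟩ x hx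
  set r := ‖x₀‖ * 2⁻¹
  have hr : 0 < r := by positivity
  have hx₀r : ‖x₀‖ = r * 2 := (inv_mul_cancel_right₀ two_ne_zero _).symm
  rw [hx₀r] at hx hx₀ hpos hxR hlarge ⊢
  calc u x ≤ k * (radialFund τ r * 2 ^ (-τ)) + A - δ * radialFund τ r :=
        hgap r hr hrR hr0 hAr hsmall ⟨x₀, hx₀r, hx₀.le⟩ x hx
    _ ≤ k * (radialFund τ (r * 2) + Real.log 2) + A - δ * radialFund τ (r * 2) := by
        gcongr
        · exact radialFund_mul_two_rpow_le hτ hr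
        · exact antitoneOn_radialFund hτ hr hpos (by linarith)
    _ ≤ (k - δ / 2) * radialFund τ (r * 2) := by linarith
    _ ≤ max (k - δ / 2) (k / 2) * radialFund τ (r * 2) := by
        gcongr
        · exact radialFund_nonneg hτ hpos (hxR.trans hu.radius_le_one)
        · exact le_max_left _ _

lemma le_of_mem_sphereBounds (hu : PuncturedSol p m R A u)
    (hP : Subcritical (finrank ℝ E) p m τ β) (hk : k ∈ sphereBounds τ u) :
    ∀ x, 0 < ‖x‖ → ‖x‖ ≤ R → u x ≤ k * radialFund τ ‖x‖ + A := by
  intro x hx hxR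
  obtain ⟨hk0, hfreq⟩ := hk
  obtain ⟨r, hr, hr0, hrx⟩ := (hfreq.and_eventually (Ioo_mem_nhdsGT hx)).exists
  have hfund := radialFund_nonneg hP.tau_nonneg hu.radius_pos hu.radius_le_one
  exact hu.le_radialFund hP hk0 hr0 le_rfl
    (fun y hy => (hr y hy).trans (le_add_of_nonneg_right hu.bound_nonneg))
    (fun y hy => (hu.le_bound y hy).trans (le_add_of_nonneg_left (mul_nonneg hk0.le hfund)))
    x hrx.le hxR

lemma le_sInf_sphereBounds (hu : PuncturedSol p m R A u)
    (hP : Subcritical (finrank ℝ E) p m τ β) (hne : (sphereBounds τ u).Nonempty) :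
    ∀ x, 0 < ‖x‖ → ‖x‖ ≤ R → u x ≤ sInf (sphereBounds τ u) * radialFund τ ‖x‖ + A := by
  intro x hx hxR
  have hfund := radialFund_nonneg hP.tau_nonneg hx (hxR.trans hu.radius_le_one)
  have hmono : Monotone fun k => k * radialFund τ ‖x‖ + A := fun a b hab => by
    dsimp only
    gcongr
  have hcont : Continuous fun k => k * radialFund τ ‖x‖ + A := by fun_prop
  rw [hmono.map_csInf_of_continuousAt hcont.continuousAt hne ⟨0, fun k hk => hk.1.le⟩]
  exact le_csInf (hne.image _)
    (forall_mem_image.2 fun k hk => hu.le_of_mem_sphereBounds hP hk x hx hxR)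

lemma tendsto_div_radialFund (hN : 2 ≤ finrank ℝ E) (hu : PuncturedSol p m R A u)
    (hP : Subcritical (finrank ℝ E) p m τ β) (hne : (sphereBounds τ u).Nonempty) :
    Tendsto (fun x : E => u x / radialFund τ ‖x‖) (𝓝[≠] 0) (𝓝 (sInf (sphereBounds τ u))) := by
  have hle := hu.le_sInf_sphereBounds hP hne
  have hfund := (tendsto_radialFund_atTop hP.tau_nonneg).comp (tendsto_norm_nhdsNE_zero (E := E))
  have hpos : ∀ᶠ x : E in 𝓝[≠] 0, 0 < radialFund τ ‖x‖ := hfund.eventually_gt_atTop 0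
  refine tendsto_order.2 ⟨fun a ha => ?_, fun a ha => ?_⟩
  · rcases lt_or_ge a 0 with ha0 | ha0
    · filter_upwards [hu.eventually_norm_le, hpos] with x hx hμ
      exact ha0.trans_le (div_nonneg (hu.nonneg x hx.1 hx.2) hμ.le)
    · obtain ⟨k₁, hak₁, hk₁⟩ := exists_between ha
      by_contra hcon
      have hlow : ∃ᶠ x : E in 𝓝[≠] 0, u x < k₁ * radialFund τ ‖x‖ :=
        ((not_eventually.1 hcon).and_eventually hpos).mono fun x ⟨hxa, hx⟩ =>
          (div_lt_iff₀ hx).1 ((not_lt.1 hxa).trans_lt hak₁)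
      obtain ⟨k₂, hk₂, hlt⟩ :=
        hu.exists_lt_mem_sphereBounds hN hP (ha0.trans_lt hak₁) hk₁ hle hlow
      exact hlt.not_ge (csInf_le ⟨0, fun k hk => hk.1.le⟩ hk₂)
  · have habsorb : ∀ᶠ x : E in 𝓝[≠] 0,
        A < (a - sInf (sphereBounds τ u)) * radialFund τ ‖x‖ :=
      (hfund.const_mul_atTop (sub_pos.2 ha)).eventually_gt_atTop A
    filter_upwards [hu.eventually_norm_le, hpos, habsorb] with x hx hμ hA
    rw [div_lt_iff₀ hμ]
    linarith [hle x hx.1 hx.2]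

theorem classification (hN : 2 ≤ finrank ℝ E) (hu : PuncturedSol p m R A u)
    (hP : Subcritical (finrank ℝ E) p m τ β) :
    Xor (∃ k : ℝ, 0 ≤ k ∧ Tendsto (fun x : E => u x / radialFund τ ‖x‖) (𝓝[≠] 0) (𝓝 k))
      (Tendsto (fun x : E => ‖x‖ ^ β * u x) (𝓝[≠] 0)
        (𝓝 (((p - 1) * (β - τ)) ^ (β + 1) / β))) := by
  have : Nontrivial E := Module.nontrivial_of_finrank_pos (R := ℝ) (by omega)
  refine (xor_iff_or_and_not_and _ _).2 ⟨?_, ?_⟩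
  · by_cases hne : (sphereBounds τ u).Nonempty
    · exact Or.inl ⟨_, Real.sInf_nonneg fun k hk => hk.1.le, hu.tendsto_div_radialFund hN hP hne⟩
    · refine Or.inr (hu.tendsto_rpow_mul hP (hu.frequently_le_of_eventually_lt hN hP ?_))
      simpa [sphereBounds, Set.Nonempty] using hne
  · rintro ⟨⟨k, -, hk⟩, hlim⟩
    have hfund : ∀ᶠ x : E in 𝓝[≠] 0, 0 < radialFund τ ‖x‖ := tendsto_norm_nhdsNE_zero.eventually
      ((tendsto_radialFund_atTop hP.tau_nonneg).eventually_gt_atTop 0)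
    have hzero : Tendsto (fun x : E => ‖x‖ ^ β * u x) (𝓝[≠] 0) (𝓝 (0 * k)) := by
      refine (((tendsto_rpow_mul_radialFund hP.tau_nonneg hP.tau_lt).comp
        tendsto_norm_nhdsNE_zero).mul hk).congr' ?_
      filter_upwards [hfund] with x hx
      simp only [Function.comp_apply]
      field_simp
    have hb := hP.b_pos
    have hβ := hP.beta_pos
    have hlimit : 0 < ((p - 1) * (β - τ)) ^ (β + 1) / β := by positivity
    exact hlimit.ne' ((tendsto_nhds_unique hlim hzero).trans (zero_mul k))

end PuncturedSol

/-! ### Strong solutions -/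

section StrongSolution

variable {E : Type*} [NormedAddCommGroup E] [InnerProductSpace ℝ E]

lemma HasLineJet.of_hasFDerivAt_gradient [CompleteSpace E] {u : E → ℝ} {x : E} {H : E →L[ℝ] E}
    (hu : ∀ᶠ y in 𝓝 x, DifferentiableAt ℝ u y) (hH : HasFDerivAt (gradient u) H x) :
    HasLineJet u x (gradient u x) H := fun ξ => by
  refine ⟨fun s => inner ℝ (gradient u (x + s • ξ)) ξ, ?_, by simp, ?_⟩
  · filter_upwards [(tendsto_line x ξ).eventually hu] with s hs
    rw [inner_gradient_left]
    exact hs.hasFDerivAt.comp_hasDerivAt s (hasDerivAt_line x ξ s)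
  · have hline : HasFDerivAt (gradient u) H (x + (0 : ℝ) • ξ) := by simpa using hH
    simpa using (hline.comp_hasDerivAt 0 (hasDerivAt_line x ξ 0)).inner ℝ
      (hasDerivAt_const (0 : ℝ) ξ)

lemma differentiableAt_gradient_of_contDiffAt [CompleteSpace E] {u : E → ℝ} {x : E}
    (hu : ContDiffAt ℝ 2 u x) : DifferentiableAt ℝ (gradient u) x :=
  (InnerProductSpace.toDual ℝ E).symm.toContinuousLinearEquiv.differentiableAt.comp x
    ((hu.fderiv_right (m := 1) (by norm_num)).differentiableAt (by norm_num))

variable {N : ℕ} {p q : ℝ} {u : EuclideanSpace ℝ (Fin N) → ℝ} {x : EuclideanSpace ℝ (Fin N)}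

lemma trace_fderiv_pGradField {H : EuclideanSpace ℝ (Fin N) →L[ℝ] EuclideanSpace ℝ (Fin N)}
    (hH : HasFDerivAt (gradient u) H x) (hne : gradient u x ≠ 0) :
    LinearMap.trace ℝ (EuclideanSpace ℝ (Fin N)) (fderiv ℝ (pGradField p u) x) =
      ‖gradient u x‖ ^ (p - 2) * pTrace p (gradient u x) H := by
  have hg : 0 < ‖gradient u x‖ := norm_pos_iff.2 hne
  have hsq : ∀ t : ℝ, 0 ≤ t → (t ^ 2) ^ ((p - 2) / 2) = t ^ (p - 2) := fun t ht => by
    rw [← Real.rpow_natCast_mul ht, Nat.cast_ofNat, mul_div_cancel₀ _ two_ne_zero]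
  have hfield : pGradField p u =
      (fun y => (‖gradient u y‖ ^ 2) ^ ((p - 2) / 2)) • gradient u := by
    ext1 y
    simp only [pGradField, Pi.smul_apply', hsq _ (norm_nonneg _)]
  have hpow := hH.norm_sq.rpow_const (p := (p - 2) / 2) (Or.inl (by positivity))
  rw [hfield, (hpow.smul hH).fderiv, ContinuousLinearMap.toLinearMap_add, map_add,
    ContinuousLinearMap.toLinearMap_smul, map_smul, ContinuousLinearMap.coe_smulRight,
    LinearMap.trace_smulRight, Real.rpow_sub_one (by positivity), hsq _ hg.le]
  simp only [smul_eq_mul, ContinuousLinearMap.coe_coe, smul_apply,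
    ContinuousLinearMap.comp_apply, innerSL_apply_apply, nsmul_eq_mul, Nat.cast_ofNat, pTrace,
    NormedSpace.normalize, map_smul, inner_smul_left, inner_smul_right, conj_trivial]
  rw [real_inner_comm]
  field_simp

lemma IsStrongSolution.solAt {G : Set (EuclideanSpace ℝ (Fin N))} (hG : IsOpen G)
    (hu : IsStrongSolution p q G u) (hx : x ∈ G) : SolAt p (q - p + 2) 1 u x := by
  obtain ⟨hC1, hC3, heq⟩ := hu
  have hdiff : ∀ y ∈ G, DifferentiableAt ℝ u y := fun y hy =>
    (hC1.differentiableOn one_ne_zero).differentiableAt (hG.mem_nhds hy)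
  have hgrad : ContinuousOn (gradient u) G :=
    (InnerProductSpace.toDual ℝ (EuclideanSpace ℝ (Fin N))).symm.continuous.comp_continuousOn
      (hC1.continuousOn_fderiv_of_isOpen hG le_rfl)
  have hopen : IsOpen {y | y ∈ G ∧ gradient u y ≠ 0} :=
    hgrad.isOpen_inter_preimage hG isOpen_compl_singleton
  refine ⟨hdiff x hx, fun hne => ?_⟩
  have hH := (differentiableAt_gradient_of_contDiffAt
    ((hC3.contDiffAt (hopen.mem_nhds ⟨hx, hne⟩)).of_le (by norm_num))).hasFDerivAt
  have hg : 0 < ‖gradient u x‖ := norm_pos_iff.2 hne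
  refine ⟨_, .of_hasFDerivAt_gradient (eventually_of_mem (hG.mem_nhds hx) hdiff) hH, ?_⟩
  have htrace := (heq x hx).2
  rw [trace_fderiv_pGradField hH hne] at htrace
  rw [one_mul, show q - p + 2 = q - (p - 2) by ring, Real.rpow_sub hg, eq_div_iff (by positivity),
    ← htrace, mul_comm]

lemma IsStrongSolution.exists_puncturedSol {Ω : Set (EuclideanSpace ℝ (Fin N))} (hΩ : IsOpen Ω)
    (h0 : 0 ∈ Ω) (hu : IsStrongSolution p q (Ω \ {0}) u) (hpos : ∀ x ∈ Ω \ {0}, 0 ≤ u x) :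
    ∃ R A, PuncturedSol p (q + 1 - p) R A u := by
  obtain ⟨ε, hε, hball⟩ := nhds_basis_closedBall.mem_iff.1 (hΩ.mem_nhds h0)
  set R := min ε 1
  have hR : 0 < R := lt_min hε one_pos
  have hmem : ∀ x : EuclideanSpace ℝ (Fin N), 0 < ‖x‖ → ‖x‖ ≤ R → x ∈ Ω \ {0} := fun x hx hxR =>
    ⟨hball (mem_closedBall_zero_iff.2 (hxR.trans (min_le_left _ _))), norm_pos_iff.1 hx⟩
  have hsol : ∀ x : EuclideanSpace ℝ (Fin N), 0 < ‖x‖ → ‖x‖ ≤ R →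
      SolAt p (q + 1 - p + 1) 1 u x := fun x hx hxR => by
    convert hu.solAt (hΩ.sdiff isClosed_singleton) (hmem x hx hxR) using 1
    ring
  have hcont : ContinuousOn u (sphere 0 R) := fun x hx => by
    rw [mem_sphere_zero_iff_norm] at hx
    exact (hsol x (hR.trans_eq hx.symm) hx.le).1.continuousAt.continuousWithinAt
  obtain ⟨M, hM⟩ := ((isCompact_sphere _ R).image_of_continuousOn hcont).bddAbove
  exact ⟨R, max M 0, hR, min_le_right _ _, le_max_right _ _, hsol,
    fun x hx hxR => hpos x (hmem x hx hxR),
    fun x hx => (hM ⟨x, by simpa using hx, rfl⟩).trans (le_max_left _ _)⟩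

lemma mup_eq_radialFund (hp : 1 < p) (hpN : p ≤ N) (x : EuclideanSpace ℝ (Fin N)) :
    mup N p x = radialFund ((N - p) / (p - 1)) ‖x‖ := by
  have hp0 : 0 < p - 1 := sub_pos.2 hp
  rcases hpN.lt_or_eq with h | h
  · have hNp : 0 < N - p := sub_pos.2 h
    rw [mup, if_pos h, radialFund_of_pos (div_pos hNp hp0), ← neg_div, neg_sub]
    field_simp
  · rw [mup, if_neg h.not_lt, h, sub_self, zero_div, radialFund_zero]

end StrongSolution

lemma subcritical_of_lt {N p q : ℝ} (hN : 1 < N) (hp : 1 < p) (hpN : p ≤ N) (hq1 : p - 1 < q)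
    (hq2 : q < N * (p - 1) / (N - 1)) :
    Subcritical N p (q + 1 - p) ((N - p) / (p - 1)) ((p - q) / (q + 1 - p)) := by
  have hp0 : 0 < p - 1 := sub_pos.2 hp
  have hm : 0 < q + 1 - p := by linarith
  rw [lt_div_iff₀ (sub_pos.2 hN)] at hq2
  refine ⟨hp, div_mul_cancel₀ _ hp0.ne', div_nonneg (sub_nonneg.2 hpN) hp0.le, ?_, ?_⟩
  · rw [div_lt_div_iff₀ hp0 hm]
    linarith
  · field_simp
    ring

-- `λ_{N,p,q}` in terms of the exponents `τ = (N - p) / (p - 1)` and `β = β_q` of `Subcritical`.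
lemma lambda_eq {N p q : ℝ} (hp : 1 < p) (hq : p - 1 < q) :
    ((p - q) / (q + 1 - p))⁻¹ * ((N * (p - 1) - (N - 1) * q) / (q + 1 - p)) ^ (1 / (q + 1 - p)) =
      ((p - 1) * ((p - q) / (q + 1 - p) - (N - p) / (p - 1))) ^ ((p - q) / (q + 1 - p) + 1) /
        ((p - q) / (q + 1 - p)) := by
  have hp0 : 0 < p - 1 := sub_pos.2 hp
  have hm : 0 < q + 1 - p := by linarith
  have hexp : (p - q) / (q + 1 - p) + 1 = 1 / (q + 1 - p) := by
    field_simp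
    ring
  have hbase : (p - 1) * ((p - q) / (q + 1 - p) - (N - p) / (p - 1)) =
      (N * (p - 1) - (N - 1) * q) / (q + 1 - p) := by
    field_simp
    ring
  rw [hexp, hbase, inv_mul_eq_div]

/-- Full classification of isolated singularities of nonnegative solutions:
exactly one of the two alternatives holds. -/
theorem classification_isolated_singularities (N : ℕ) (hN : 2 ≤ N) (p q : ℝ) (hp1 : 1 < p)
    (hpN : p ≤ N) (hq1 : p - 1 < q) (hq2 : q < (N : ℝ) * (p - 1) / ((N : ℝ) - 1))
    (Ω : Set (EuclideanSpace ℝ (Fin N))) (hΩ : IsOpen Ω)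
    (h0 : (0 : EuclideanSpace ℝ (Fin N)) ∈ Ω)
    (u : EuclideanSpace ℝ (Fin N) → ℝ) (hu : IsStrongSolution p q (Ω \ {0}) u)
    (hpos : ∀ x ∈ Ω \ {0}, 0 ≤ u x) :
    Xor'
      (∃ k : ℝ, 0 ≤ k ∧
        Filter.Tendsto (fun x => u x / mup N p x) (𝓝[≠] (0 : EuclideanSpace ℝ (Fin N)))
          (nhds k))
      (Filter.Tendsto (fun x => ‖x‖ ^ ((p - q) / (q + 1 - p)) * u x)
        (𝓝[≠] (0 : EuclideanSpace ℝ (Fin N)))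
        (nhds (((p - q) / (q + 1 - p))⁻¹
          * (((N : ℝ) * (p - 1) - ((N : ℝ) - 1) * q) / (q + 1 - p)) ^ (1 / (q + 1 - p))))) := by
  obtain ⟨R, A, h⟩ := hu.exists_puncturedSol hΩ h0 hpos
  simp only [mup_eq_radialFund hp1 hpN, lambda_eq hp1 hq1]
  have hP := subcritical_of_lt (Nat.one_lt_cast.2 hN) hp1 hpN hq1 hq2
  have hdim : finrank ℝ (EuclideanSpace ℝ (Fin N)) = N := finrank_euclideanSpace_fin
  exact h.classification (hdim.symm ▸ hN) (hdim.symm ▸ hP)
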